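/- arXiv:math/9807165 — 6 statements merged into one kernel-verified Lean document; each statement's English description precedes it below -/
import Mathlib

section
/- Let c ≥ 2 and n ≥ 3·c!/2. For every partition of the edge set of Ī_n (all ordered pairs (i,j) with i ≠ j on vertex set {1, …, n}) into c parts each of which is a Ferrers digraph, there exist two distinct parts F and G forming a crossed pair: there is a row containing edges of both parts (i.e., there exist i, j, j' with (i,j) ∈ E(F) and (i,j') ∈ E(G)) and a column containing edges of both parts (i.e., there exist i₁, i₂, j₀ with (i₁,j₀) ∈ E(F) and (i₂,j₀) ∈ E(G)). -/
/-- A subtree representation of a digraph with edge relation `E` on vertex type `V`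
in a host graph `T` on vertex type `W`: each digraph vertex `v` gets a source set
`src v` and a sink set `snk v`, each inducing a connected (hence nonempty) subgraph
of `T`, such that `E u v` holds iff `src u` meets `snk v`. -/
structure SubtreeRep {V W : Type} (E : V → V → Prop) (T : SimpleGraph W) where
  src : V → Set W
  snk : V → Set W
  src_connected : ∀ v, (T.induce (src v)).Connected
  snk_connected : ∀ v, (T.induce (snk v)).Connected
  rep : ∀ u v, E u v ↔ (src u ∩ snk v).Nonempty

/-- The set of leaves (vertices of degree 1) of a graph. -/
def treeLeaves {W : Type} (T : SimpleGraph W) : Set W :=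
  {w | (T.neighborSet w).ncard = 1}

/-- The leafage of a digraph: the minimum number of leaves of a finite host tree in
which the digraph has a subtree representation. -/
noncomputable def digLeafage {V : Type} (E : V → V → Prop) : ℕ :=
  sInf {k | ∃ (W : Type) (_ : Fintype W) (T : SimpleGraph W),
    T.IsTree ∧ Nonempty (SubtreeRep E T) ∧ (treeLeaves T).ncard = k}

/-- The catch leafage of a digraph: the minimum number of leaves of a finite host tree
in which the digraph has a subtree representation all of whose sink sets are single
vertices. -/
noncomputable def catchLeafage {V : Type} (E : V → V → Prop) : ℕ :=
  sInf {k | ∃ (W : Type) (_ : Fintype W) (T : SimpleGraph W) (R : SubtreeRep E T),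
    T.IsTree ∧ (∀ v, ∃ x, R.snk v = {x}) ∧ (treeLeaves T).ncard = k}

/-- `C` is between `A` and `B` in `T`: `A` and `B` are disjoint and the unique path of
`T` from `A` to `B` (i.e. the path meeting `A` only at its first vertex and `B` only
at its last vertex) contains a vertex of `C` (possibly an endpoint). -/
def Between {W : Type} (T : SimpleGraph W) (A B C : Set W) : Prop :=
  A ∩ B = ∅ ∧ ∃ (a b : W) (p : T.Walk a b), a ∈ A ∧ b ∈ B ∧ p.IsPath ∧
    (∀ x ∈ p.support, x ∈ A → x = a) ∧ (∀ x ∈ p.support, x ∈ B → x = b) ∧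
    ∃ x ∈ C, x ∈ p.support

/-- An asteroidal collection of sets in `T`: pairwise disjoint, and no member is
between two other members. -/
def Asteroidal {W ι : Type} (T : SimpleGraph W) (F : ι → Set W) : Prop :=
  (∀ i j, i ≠ j → F i ∩ F j = ∅) ∧
  ∀ i j k, i ≠ j → i ≠ k → j ≠ k → ¬ Between T (F i) (F j) (F k)

/-- The star `K_{1,n}`: the center `none` is adjacent to the `n` leaves `some i`. -/
def starGraph (n : ℕ) : SimpleGraph (Option (Fin n)) :=
  SimpleGraph.fromRel (fun a _ => a = none)

/-- A Ferrers digraph: the successor sets are linearly ordered by inclusion. -/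
def IsFerrers {V : Type} (F : V → V → Prop) : Prop :=
  ∀ u u' : V, {v | F u v} ⊆ {v | F u' v} ∨ {v | F u' v} ⊆ {v | F u v}

/-- The Ferrers dimension `f(D)`: the minimum number of Ferrers digraphs whose
intersection is `E`. -/
noncomputable def ferrersDim {V : Type} (E : V → V → Prop) : ℕ :=
  sInf {k | ∃ F : Fin k → V → V → Prop,
    (∀ i, IsFerrers (F i)) ∧ (∀ u v, E u v ↔ ∀ i, F i u v)}

/-- `f*(D)`: the minimum number of pairwise edge-disjoint Ferrers digraphs whose
union is the complement of `E` in `V × V`. -/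
noncomputable def fstar {V : Type} (E : V → V → Prop) : ℕ :=
  sInf {k | ∃ F : Fin k → V → V → Prop,
    (∀ i, IsFerrers (F i)) ∧
    (∀ i j, i ≠ j → ∀ u v, ¬ (F i u v ∧ F j u v)) ∧
    (∀ u v, ¬ E u v ↔ ∃ i, F i u v)}

/-- The width of the incidence poset `P(D)`: the maximum size of an antichain (under
inclusion) of predecessor sets of the digraph `E`. -/
noncomputable def incWidth {V : Type} (E : V → V → Prop) : ℕ :=
  sSup {k | ∃ A : Finset (Set V),
    (↑A : Set (Set V)) ⊆ Set.range (fun v => {u | E u v}) ∧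
    IsAntichain (· ⊆ ·) (↑A : Set (Set V)) ∧ A.card = k}

/-- The digraph `D_n` with adjacency matrix `J - I`: all pairs of distinct vertices. -/
def DnRel (n : ℕ) (i j : Fin n) : Prop := i ≠ j

/-- The digraph `E_n` with adjacency matrix `[[I, Y], [Yᵀ, 0]]` (vertex `n-1` playing
the role of the last row/column). -/
def EnRel (n : ℕ) (i j : Fin n) : Prop :=
  (i.val < n - 1 ∧ j.val < n - 1 ∧ i = j) ∨
  (i.val < n - 1 ∧ j.val = n - 1) ∨
  (i.val = n - 1 ∧ j.val < n - 1)

/-- The digraph `C_n`: a directed `n`-cycle plus a loop at each vertex. -/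
def CnRel (n : ℕ) (i j : Fin n) : Prop := j = i ∨ j.val = (i.val + 1) % n

/-- The digraph `M_{k,m}` on `Fin k × Fin m`: identity diagonal blocks, all-ones
blocks above the diagonal, all-zeros blocks below. -/
def MkmRel (k m : ℕ) (p q : Fin k × Fin m) : Prop :=
  p.1 < q.1 ∨ (p.1 = q.1 ∧ p.2 = q.2)

/-- The digraph `F_n` with adjacency matrix `[[I, Y], [Yᵀ, 1]]` (vertex `n-1` playing
the role of the last row/column). -/
def FnRel (n : ℕ) (i j : Fin n) : Prop := i = j ∨ i.val = n - 1 ∨ j.val = n - 1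

/-- The digraph `P_n`: a directed path `1 → 2 → ⋯ → n` plus a loop at each vertex. -/
def PnRel (n : ℕ) (i j : Fin n) : Prop := j = i ∨ j.val = i.val + 1

/-!
Let `R a` and `C a` be the sets of rows and columns met by the part `F a`. If no two parts cross,
the rectangles `R a ×ˢ C a` are pairwise disjoint, so `F a` consists of all off-diagonal positions
of its rectangle. A Ferrers digraph without loops is asymmetric, whence each rectangle contains at
most one diagonal position. Let `K` be the set of vertices whose diagonal position is covered; then
`#K` is at most the number `c` of parts.

With 0/1 incidence matrices `A` of the `R a` and `B` of the `C a`, the product `A * B` is the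
all-ones matrix with the diagonal entries outside `K` replaced by `0`. A vector in its kernel is
supported on `K` and has coordinate sum `0`, so `n - c ≤ dim ker B ≤ #K - 1 ≤ c - 1` (and `n ≤ c`
if `K` is empty). If `n = 2 * c - 1`, all of these are equalities, and then the differences of basis
vectors indexed by `K` lie in `ker B`, and by symmetry in `ker Aᵀ`: a rectangle covering one
diagonal position of `K` covers all of them, which is impossible for `n ≥ 2`.
-/

/-- The set of vertices `i` whose row in the adjacency matrix of `F` contains an edge. -/
def rowSupport {V : Type*} (F : V → V → Prop) : Set V :=
  {i | ∃ j, F i j}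

/-- The set of vertices `j` whose column in the adjacency matrix of `F` contains an edge. -/
def colSupport {V : Type*} (F : V → V → Prop) : Set V :=
  {j | ∃ i, F i j}

/-- Two digraphs form a crossed pair if they have edges in a common row and edges in a common
column; the row and the column are independent of each other, and `F = G` is allowed. -/
def IsCrossedPair {V : Type*} (F G : V → V → Prop) : Prop :=
  (∃ i j j', F i j ∧ G i j') ∧ ∃ i i' j₀, F i j₀ ∧ G i' j₀

theorem IsFerrers.asymm {V : Type} {F : V → V → Prop} (hF : IsFerrers F)
    (hirr : ∀ i, ¬ F i i) {i j : V} (hij : F i j) : ¬ F j i := by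
  intro hji
  rcases hF i j with h | h
  · exact hirr j (h hij)
  · exact hirr i (h hji)

section Factorization

open Module

theorem card_le_card_add_finrank_ker {V ι 𝕜 : Type*} [Fintype V] [Fintype ι] [Field 𝕜]
    (B : Matrix ι V 𝕜) :
    Fintype.card V ≤ Fintype.card ι + finrank 𝕜 (LinearMap.ker B.mulVecLin) := by
  have hrank := B.mulVecLin.finrank_range_add_finrank_ker
  have hrange := (LinearMap.range B.mulVecLin).finrank_le
  rw [finrank_fintype_fun_eq_card] at hrank hrange
  omega

variable {V : Type*} [DecidableEq V]

/-- The all-ones matrix with the diagonal entries outside `K` replaced by `0`. -/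
def onesSubDiag (R : Type*) [CommRing R] (K : Finset V) : Matrix V V R :=
  Matrix.of 1 - Matrix.diagonal fun i => if i ∈ K then 0 else 1

theorem onesSubDiag_apply {R : Type*} [CommRing R] (K : Finset V) (i j : V) :
    onesSubDiag R K i j = if i = j ∧ i ∉ K then 0 else 1 := by
  by_cases hij : i = j <;> by_cases hi : i ∈ K <;> simp_all [onesSubDiag]

theorem transpose_onesSubDiag {R : Type*} [CommRing R] (K : Finset V) :
    (onesSubDiag R K).transpose = onesSubDiag R K := by
  rw [onesSubDiag, Matrix.transpose_sub, Matrix.diagonal_transpose]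
  rfl

section Kernel

variable [Fintype V] {R : Type*} [CommRing R] {K : Finset V} {x : V → R}

theorem onesSubDiag_mulVec_apply (K : Finset V) (x : V → R) (i : V) :
    (onesSubDiag R K).mulVec x i = ∑ j, x j - if i ∈ K then 0 else x i := by
  rw [onesSubDiag, Matrix.sub_mulVec, Pi.sub_apply, Matrix.mulVec_diagonal, ite_mul, zero_mul,
    one_mul]
  simp [Matrix.mulVec, dotProduct]

variable [IsDomain R] [CharZero R] [Nontrivial V]

theorem sum_eq_zero_of_onesSubDiag_mulVec_eq_zero (hx : (onesSubDiag R K).mulVec x = 0) :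
    ∑ i, x i = 0 := by
  have hrow (i : V) : ∑ j, x j = if i ∈ K then 0 else x i := by
    rw [← sub_eq_zero, ← onesSubDiag_mulVec_apply, hx, Pi.zero_apply]
  rcases K.eq_empty_or_nonempty with rfl | ⟨i, hi⟩
  · have hconst (i : V) : x i = ∑ j, x j := by simpa using (hrow i).symm
    have hsum : ∑ i, x i = Fintype.card V * ∑ i, x i := by
      conv_lhs => rw [Fintype.sum_congr _ _ hconst]
      simp
    have hcard : (Fintype.card V : R) ≠ 1 := by exact_mod_cast Fintype.one_lt_card.ne'
    by_contra hne
    exact hcard (mul_right_cancel₀ hne (hsum.symm.trans (one_mul _).symm))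
  · simpa [hi] using hrow i

theorem apply_eq_zero_of_onesSubDiag_mulVec_eq_zero (hx : (onesSubDiag R K).mulVec x = 0) {i : V}
    (hi : i ∉ K) : x i = 0 := by
  have hrow := onesSubDiag_mulVec_apply K x i
  rwa [hx, sum_eq_zero_of_onesSubDiag_mulVec_eq_zero hx, if_neg hi, Pi.zero_apply, zero_sub,
    eq_comm, neg_eq_zero] at hrow

end Kernel

variable {𝕜 : Type*} [Field 𝕜]

/-- The vectors supported on `K` whose coordinates sum to zero, as the direction of the affine
span of the standard basis vectors indexed by `K`. -/
def sumZeroOn (𝕜 : Type*) [Field 𝕜] (K : Finset V) : Submodule 𝕜 (V → 𝕜) :=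
  vectorSpan 𝕜 (Set.range fun i : K => (Pi.single i.1 1 : V → 𝕜))

theorem finrank_sumZeroOn_le (K : Finset V) : finrank 𝕜 (sumZeroOn 𝕜 K) ≤ K.card - 1 := by
  rcases K.eq_empty_or_nonempty with rfl | hK
  · rw [sumZeroOn, Set.range_eq_empty, vectorSpan_empty, finrank_bot]
    exact Nat.zero_le _
  · exact finrank_vectorSpan_range_le 𝕜 _ (by simp [Nat.sub_add_cancel hK.card_pos])

theorem mem_sumZeroOn_of_sum_eq_zero [Fintype V] {K : Finset V} {x : V → 𝕜} (hsum : ∑ i, x i = 0)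
    (hsupp : ∀ i ∉ K, x i = 0) : x ∈ sumZeroOn 𝕜 K := by
  have hsumK : ∑ i : K, x i = 0 := by
    rw [Finset.sum_coe_sort K x, Finset.sum_subset K.subset_univ fun i _ => hsupp i, hsum]
  have hmem := weightedVSub_mem_vectorSpan hsumK fun i : K => (Pi.single i.1 1 : V → 𝕜)
  rwa [Finset.univ.weightedVSub_eq_linear_combination hsumK,
    Finset.sum_coe_sort K fun i => x i • (Pi.single i 1 : V → 𝕜),
    Finset.sum_subset K.subset_univ fun i _ hi => by rw [hsupp i hi, zero_smul],
    ← pi_eq_sum_univ' x] at hmem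

variable {ι : Type*} [Fintype V] [Nontrivial V] [Fintype ι] [CharZero 𝕜] {K : Finset V}
  {A : Matrix V ι 𝕜} {B : Matrix ι V 𝕜}

theorem ker_mulVecLin_le_sumZeroOn (hAB : A * B = onesSubDiag 𝕜 K) :
    LinearMap.ker B.mulVecLin ≤ sumZeroOn 𝕜 K := by
  intro x hx
  have hMx : (onesSubDiag 𝕜 K).mulVec x = 0 := by
    rw [← hAB, ← Matrix.mulVec_mulVec, show B.mulVec x = 0 from hx, Matrix.mulVec_zero]
  exact mem_sumZeroOn_of_sum_eq_zero (sum_eq_zero_of_onesSubDiag_mulVec_eq_zero hMx)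
    fun i hi => apply_eq_zero_of_onesSubDiag_mulVec_eq_zero hMx hi

theorem card_le_of_mul_eq_onesSubDiag (hAB : A * B = onesSubDiag 𝕜 K) :
    Fintype.card V ≤ Fintype.card ι + (K.card - 1) :=
  (card_le_card_add_finrank_ker B).trans <| Nat.add_le_add_left
    ((Submodule.finrank_mono (ker_mulVecLin_le_sumZeroOn hAB)).trans (finrank_sumZeroOn_le K)) _

theorem apply_eq_apply_of_mul_eq_onesSubDiag (hAB : A * B = onesSubDiag 𝕜 K)
    (hcard : Fintype.card ι + (K.card - 1) ≤ Fintype.card V) {i j : V} (hi : i ∈ K) (hj : j ∈ K)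
    (a : ι) : B a i = B a j := by
  have hker : LinearMap.ker B.mulVecLin = sumZeroOn 𝕜 K := by
    refine Submodule.eq_of_le_of_finrank_le (ker_mulVecLin_le_sumZeroOn hAB) ?_
    have := finrank_sumZeroOn_le (𝕜 := 𝕜) K
    have := card_le_card_add_finrank_ker B
    omega
  have hmem : (Pi.single i 1 - Pi.single j 1 : V → 𝕜) ∈ LinearMap.ker B.mulVecLin :=
    hker ▸ vsub_mem_vectorSpan 𝕜 (Set.mem_range_self (⟨i, hi⟩ : K))
      (Set.mem_range_self (⟨j, hj⟩ : K))
  simpa [Matrix.mulVec_sub, sub_eq_zero] using congrFun (LinearMap.mem_ker.mp hmem) a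

end Factorization

section Uncrossed

variable {V ι : Type*} {F : ι → V → V → Prop}

theorem eq_of_mem_supports (hcross : Pairwise fun a b => ¬ IsCrossedPair (F a) (F b)) {a b : ι}
    {i j : V} (hia : i ∈ rowSupport (F a)) (hja : j ∈ colSupport (F a))
    (hib : i ∈ rowSupport (F b)) (hjb : j ∈ colSupport (F b)) : a = b := by
  obtain ⟨k, hk⟩ := hia
  obtain ⟨l, hl⟩ := hja
  obtain ⟨k', hk'⟩ := hib
  obtain ⟨l', hl'⟩ := hjb
  exact hcross.eq (not_not.mpr ⟨⟨i, k, k', hk, hk'⟩, ⟨l, l', j, hl, hl'⟩⟩)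

theorem rel_of_mem_supports (hcross : Pairwise fun a b => ¬ IsCrossedPair (F a) (F b))
    (hcover : ∀ i j, i ≠ j → ∃ a, F a i j) {a : ι} {i j : V} (hij : i ≠ j)
    (hi : i ∈ rowSupport (F a)) (hj : j ∈ colSupport (F a)) : F a i j := by
  obtain ⟨b, hb⟩ := hcover i j hij
  rwa [eq_of_mem_supports hcross hi hj ⟨j, hb⟩ ⟨i, hb⟩]

theorem subsingleton_rowSupport_inter_colSupport
    (hcross : Pairwise fun a b => ¬ IsCrossedPair (F a) (F b))
    (hcover : ∀ i j, i ≠ j → ∃ a, F a i j) (hasymm : ∀ a i j, F a i j → ¬ F a j i) (a : ι) :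
    (rowSupport (F a) ∩ colSupport (F a)).Subsingleton := by
  rintro i ⟨hir, hic⟩ j ⟨hjr, hjc⟩
  by_contra hij
  exact hasymm a i j (rel_of_mem_supports hcross hcover hij hir hjc)
    (rel_of_mem_supports hcross hcover (Ne.symm hij) hjr hic)

open Classical in
/-- The vertices `i` whose diagonal position `(i, i)` lies in the rectangle
`rowSupport (F a) ×ˢ colSupport (F a)` of some part. -/
noncomputable def coveredDiag [Fintype V] (F : ι → V → V → Prop) : Finset V :=
  {i | ∃ a, i ∈ rowSupport (F a) ∩ colSupport (F a)}

theorem mem_coveredDiag [Fintype V] {i : V} :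
    i ∈ coveredDiag F ↔ ∃ a, i ∈ rowSupport (F a) ∩ colSupport (F a) := by
  simp [coveredDiag]

theorem card_coveredDiag_le [Fintype V] [Fintype ι]
    (hsub : ∀ a, (rowSupport (F a) ∩ colSupport (F a)).Subsingleton) :
    (coveredDiag F).card ≤ Fintype.card ι := by
  choose part hpart using fun i : coveredDiag F => mem_coveredDiag.mp i.2
  have hinj : Function.Injective part := fun i j hij =>
    Subtype.ext (hsub (part i) (hpart i) (hij ▸ hpart j))
  simpa using Fintype.card_le_of_injective part hinj

/-- The incidence matrix of vertices against the row supports of the parts. -/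
noncomputable def rowIncidence (F : ι → V → V → Prop) : Matrix V ι ℚ :=
  Matrix.of fun i a => (rowSupport (F a)).indicator 1 i

/-- The incidence matrix of the column supports of the parts against vertices. -/
noncomputable def colIncidence (F : ι → V → V → Prop) : Matrix ι V ℚ :=
  Matrix.of fun a j => (colSupport (F a)).indicator 1 j

theorem rowIncidence_mul_colIncidence [Fintype V] [DecidableEq V] [Fintype ι]
    (hcross : Pairwise fun a b => ¬ IsCrossedPair (F a) (F b))
    (hcover : ∀ i j, i ≠ j → ∃ a, F a i j) :
    rowIncidence F * colIncidence F = onesSubDiag ℚ (coveredDiag F) := by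
  classical
  ext i j
  have hterm (a : ι) : rowIncidence F i a * colIncidence F a j =
      if i ∈ rowSupport (F a) ∧ j ∈ colSupport (F a) then 1 else 0 := by
    simp [rowIncidence, colIncidence, Set.indicator_apply, ← ite_and, and_comm]
  rw [Matrix.mul_apply, Fintype.sum_congr _ _ hterm, onesSubDiag_apply]
  by_cases hcell : ∃ a, i ∈ rowSupport (F a) ∧ j ∈ colSupport (F a)
  · obtain ⟨a, ha⟩ := hcell
    have hunique (b : ι) : (i ∈ rowSupport (F b) ∧ j ∈ colSupport (F b)) ↔ b = a :=
      ⟨fun hb => eq_of_mem_supports hcross hb.1 hb.2 ha.1 ha.2, fun hb => hb ▸ ha⟩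
    have hdiag : i = j → i ∈ coveredDiag F := fun h => mem_coveredDiag.mpr ⟨a, ha.1, h ▸ ha.2⟩
    rw [if_neg fun h => h.2 (hdiag h.1)]
    simp only [hunique, Finset.sum_ite_eq', Finset.mem_univ, if_true]
  · obtain rfl : i = j := by
      by_contra hne
      obtain ⟨a, ha⟩ := hcover i j hne
      exact hcell ⟨a, ⟨j, ha⟩, ⟨i, ha⟩⟩
    rw [if_pos ⟨rfl, fun h => hcell (mem_coveredDiag.mp h)⟩]
    exact Finset.sum_eq_zero fun a _ => if_neg fun ha => hcell ⟨a, ha⟩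

theorem card_add_two_le_of_pairwise_not_isCrossedPair [Fintype V] [Nontrivial V]
    [Fintype ι] (hcross : Pairwise fun a b => ¬ IsCrossedPair (F a) (F b))
    (hcover : ∀ i j, i ≠ j → ∃ a, F a i j) (hasymm : ∀ a i j, F a i j → ¬ F a j i) :
    Fintype.card V + 2 ≤ 2 * Fintype.card ι := by
  classical
  have hsub := subsingleton_rowSupport_inter_colSupport hcross hcover hasymm
  have hmul := rowIncidence_mul_colIncidence hcross hcover
  have hmulT : (colIncidence F).transpose * (rowIncidence F).transpose =
      onesSubDiag ℚ (coveredDiag F) := by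
    rw [← Matrix.transpose_mul, hmul, transpose_onesSubDiag]
  have hV : 1 < Fintype.card V := Fintype.one_lt_card
  have hK := card_coveredDiag_le hsub
  have hle := card_le_of_mul_eq_onesSubDiag hmul
  by_contra! hlt
  obtain ⟨i, hi, j, hj, hij⟩ := Finset.one_lt_card.mp (by omega : 1 < (coveredDiag F).card)
  have hextremal : Fintype.card ι + ((coveredDiag F).card - 1) ≤ Fintype.card V := by omega
  obtain ⟨a, hir, hic⟩ := mem_coveredDiag.mp hi
  have hjr : j ∈ rowSupport (F a) := by
    simpa [rowIncidence, Set.indicator_apply, hir] using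
      apply_eq_apply_of_mul_eq_onesSubDiag hmulT hextremal hi hj a
  have hjc : j ∈ colSupport (F a) := by
    simpa [colIncidence, Set.indicator_apply, hic] using
      apply_eq_apply_of_mul_eq_onesSubDiag hmul hextremal hi hj a
  exact hij (hsub a ⟨hir, hic⟩ ⟨hjr, hjc⟩)

end Uncrossed

theorem two_mul_le_three_mul_factorial_div_two_add_one {c : ℕ} (hc : 2 ≤ c) :
    2 * c ≤ 3 * c.factorial / 2 + 1 := by
  have h : 4 * c ≤ 3 * c.factorial + 2 := by
    induction c, hc using Nat.le_induction with
    | base => decide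
    | succ c hc ih =>
      rw [Nat.factorial_succ]
      nlinarith [Nat.self_le_factorial c]
  omega

theorem stmt_9_general {V : Type} {ι : Type*} [Fintype V] [Nontrivial V] [Fintype ι]
    (hcard : 2 * Fintype.card ι ≤ Fintype.card V + 1) (F : ι → V → V → Prop)
    (hferrers : ∀ a, IsFerrers (F a)) (hcover : ∀ i j, i ≠ j ↔ ∃ a, F a i j) :
    ∃ a b, a ≠ b ∧ IsCrossedPair (F a) (F b) := by
  by_contra! hcross
  have hasymm (a : ι) (i j : V) : F a i j → ¬ F a j i :=
    (hferrers a).asymm fun v hv => (hcover v v).mpr ⟨a, hv⟩ rfl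
  have := card_add_two_le_of_pairwise_not_isCrossedPair (fun a b => hcross a b)
    (fun i j => (hcover i j).mp) hasymm
  omega

/-- For `c ≥ 2` and `n ≥ 3·c!/2`, every partition of the complement of
the identity digraph on `n` vertices into `c` Ferrers digraphs has a crossed pair of
parts: two parts that appear together in some row and together in some column. -/
theorem stmt_9 (c n : ℕ) (hc : 2 ≤ c) (hn : 3 * Nat.factorial c / 2 ≤ n)
    (F : Fin c → Fin n → Fin n → Prop)
    (hferrers : ∀ a, IsFerrers (F a))
    (hdisj : ∀ a b, a ≠ b → ∀ i j, ¬ (F a i j ∧ F b i j))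
    (hcover : ∀ i j : Fin n, i ≠ j ↔ ∃ a, F a i j) :
    ∃ a b : Fin c, a ≠ b ∧
      (∃ i j j' : Fin n, F a i j ∧ F b i j') ∧
      (∃ i i' j₀ : Fin n, F a i j₀ ∧ F b i' j₀) := by
  have hcard := (two_mul_le_three_mul_factorial_div_two_add_one hc).trans (Nat.succ_le_succ hn)
  have : Nontrivial (Fin n) := Fin.nontrivial_iff_two_le.mpr (by omega)
  exact stmt_9_general (by simpa using hcard) F hferrers hcover
end

section
/- Let c ≥ 2, k ≥ 1 + C(c,2) (where C(c,2) = c(c−1)/2), and m ≥ 3·c!/2. Then f*(M_{k,m}) > c, where M_{k,m} is the digraph on km vertices indexed by pairs (r,i) with 1 ≤ r ≤ k and 1 ≤ i ≤ m, with ((r,i),(s,j)) ∈ E(M_{k,m}) iff r < s, or r = s and i = j (block adjacency matrix with identity diagonal blocks, all-1 blocks above the diagonal, and all-0 blocks below the diagonal). -/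
/-! Let `F` partition the complement of the digraph into `d ≤ c` Ferrers digraphs, the colours.
Inside one diagonal block every ordered pair of distinct vertices has a colour, and each colour is
asymmetric because the vertices of the block have loops. If some vertex `x` of the block has
out-edges of every colour and some `y` has in-edges of every colour, then so they do for any two
colours. Otherwise every vertex misses a colour in one fixed direction, so at least `1 / d` of the
vertices span no edge of some colour; drop that colour and recurse on them, which is where the
factorial comes from.

Each block thus yields a pair of colours, and among more than `C(c, 2)` blocks two yield the same
pair. Take `x` in one of them and `y` in the other, with every edge from the block of `y` to the
block of `x` in the digraph. Whenever a colour contains `(x, u)` in the first block and `(v, y)` in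
the second, it does not contain `(v, u)`, so the Ferrers property puts `(x, y)` into it. Hence two
colours share the edge `(x, y)`. -/

section AsymmetricCover

variable {K V : Type*} {R : K → V → V → Prop} {C : Finset K} {S : Finset V}

theorem one_lt_card_of_pairwise_exists_asymm (hR : ∀ α, Std.Asymm (R α))
    (hS : (S : Set V).Nontrivial) (hcov : (S : Set V).Pairwise fun u v => ∃ α ∈ C, R α u v) :
    1 < C.card := by
  obtain ⟨u, hu, v, hv, huv⟩ := hS
  obtain ⟨α, hα, hαuv⟩ := hcov hu hv huv
  obtain ⟨β, hβ, hβvu⟩ := hcov hv hu huv.symm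
  refine Finset.one_lt_card.2 ⟨α, hα, β, hβ, ?_⟩
  rintro rfl
  exact (hR α).asymm _ _ hαuv hβvu

theorem exists_large_subset_of_forall_exists_not_out (hS : S.Nonempty)
    (hmiss : ∀ x ∈ S, ∃ γ ∈ C, ∀ y, ¬ R γ x y) :
    ∃ γ ∈ C, ∃ T ⊆ S, S.card ≤ C.card * T.card ∧ ∀ x ∈ T, ∀ y ∈ T, ¬ R γ x y := by
  classical
  have : Nonempty K := hS.elim fun x hx => ⟨(hmiss x hx).choose⟩
  choose! g hgC hg using hmiss
  have hC : C.Nonempty := hS.elim fun x hx => ⟨g x, hgC x hx⟩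
  obtain ⟨γ, hγ, hmax⟩ := C.exists_max_image (fun γ => (S.filter (g · = γ)).card) hC
  refine ⟨γ, hγ, S.filter (g · = γ), S.filter_subset _, ?_, ?_⟩
  · rw [mul_comm]
    exact Finset.card_le_mul_card_image_of_maps_to hgC _ hmax
  · intro x hx y _
    obtain ⟨hxS, rfl⟩ := Finset.mem_filter.1 hx
    exact hg x hxS y

theorem exists_large_subset_of_forall_exists_not_in (hS : S.Nonempty)
    (hmiss : ∀ y ∈ S, ∃ γ ∈ C, ∀ x, ¬ R γ x y) :
    ∃ γ ∈ C, ∃ T ⊆ S, S.card ≤ C.card * T.card ∧ ∀ x ∈ T, ∀ y ∈ T, ¬ R γ x y := by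
  obtain ⟨γ, hγ, T, hT, hcard, h⟩ :=
    exists_large_subset_of_forall_exists_not_out (R := fun α => flip (R α)) hS hmiss
  exact ⟨γ, hγ, T, hT, hcard, fun x hx y hy => h y hy x hx⟩

theorem pairwise_exists_erase_of_forall_not [DecidableEq K] {γ : K}
    (hcov : (S : Set V).Pairwise fun u v => ∃ α ∈ C, R α u v)
    (hfree : ∀ x ∈ S, ∀ y ∈ S, ¬ R γ x y) :
    (S : Set V).Pairwise fun u v => ∃ α ∈ C.erase γ, R α u v := by
  intro u hu v hv huv
  obtain ⟨α, hα, hαuv⟩ := hcov hu hv huv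
  refine ⟨α, Finset.mem_erase.2 ⟨?_, hα⟩, hαuv⟩
  rintro rfl
  exact hfree u hu v hv hαuv

theorem exists_pair_common_out_common_in_of_asymm (hR : ∀ α, Std.Asymm (R α))
    (hcov : (S : Set V).Pairwise fun u v => ∃ α ∈ C, R α u v)
    (hcard : 3 * C.card.factorial ≤ 2 * S.card) :
    ∃ P ⊆ C, P.card = 2 ∧ (∃ x, ∀ α ∈ P, ∃ u, R α x u) ∧ ∃ y, ∀ α ∈ P, ∃ u, R α u y := by
  classical
  induction C using Finset.strongInduction generalizing S with
  | H C ih =>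
    have hS : 1 < S.card := by have := C.card.factorial_pos; lia
    have hne : S.Nonempty := Finset.card_pos.1 (by lia)
    by_cases hsplit :
        ∃ γ ∈ C, ∃ T ⊆ S, S.card ≤ C.card * T.card ∧ ∀ x ∈ T, ∀ y ∈ T, ¬ R γ x y
    · obtain ⟨γ, hγ, T, hTS, hST, hfree⟩ := hsplit
      have hcovT := pairwise_exists_erase_of_forall_not (hcov.mono (Finset.coe_subset.2 hTS)) hfree
      have hcardT : 3 * (C.erase γ).card.factorial ≤ 2 * T.card := by
        have hC : 0 < C.card := Finset.card_pos.2 ⟨γ, hγ⟩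
        refine Nat.le_of_mul_le_mul_left ?_ hC
        calc C.card * (3 * (C.erase γ).card.factorial)
            = 3 * C.card.factorial := by
              rw [Finset.card_erase_of_mem hγ, ← Nat.mul_factorial_pred hC.ne', mul_left_comm]
          _ ≤ 2 * S.card := hcard
          _ ≤ 2 * (C.card * T.card) := Nat.mul_le_mul_left 2 hST
          _ = C.card * (2 * T.card) := mul_left_comm ..
      obtain ⟨P, hP, hpair⟩ := ih _ (Finset.erase_ssubset hγ) hcovT hcardT
      exact ⟨P, hP.trans (C.erase_subset γ), hpair⟩
    · have hout : ∃ x ∈ S, ∀ α ∈ C, ∃ u, R α x u := by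
        by_contra! hmiss
        exact hsplit (exists_large_subset_of_forall_exists_not_out hne hmiss)
      have hin : ∃ y ∈ S, ∀ α ∈ C, ∃ u, R α u y := by
        by_contra! hmiss
        exact hsplit (exists_large_subset_of_forall_exists_not_in hne hmiss)
      obtain ⟨x, -, hx⟩ := hout
      obtain ⟨y, -, hy⟩ := hin
      obtain ⟨P, hPC, hP⟩ := Finset.exists_subset_card_eq
        (one_lt_card_of_pairwise_exists_asymm hR (Finset.one_lt_card_iff_nontrivial.1 hS) hcov)
      exact ⟨P, hPC, hP, ⟨x, fun α hα => hx α (hPC hα)⟩, ⟨y, fun α hα => hy α (hPC hα)⟩⟩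

end AsymmetricCover

section Ferrers

variable {V : Type} {F : V → V → Prop}

theorem IsFerrers.cross_of_not_cross (hF : IsFerrers F) {u v w z : V} (huv : F u v) (hwz : F w z)
    (hwv : ¬ F w v) : F u z :=
  (hF u w).elim (fun hsub => absurd (hsub huv) hwv) fun hsub => hsub hwz

theorem IsFerrers.asymm_comap_of_irrefl {ι : Type*} (hF : IsFerrers F) {f : ι → V}
    (hf : ∀ i, ¬ F (f i) (f i)) : Std.Asymm fun i j => F (f i) (f j) :=
  ⟨fun i j hij hji => hf i (hF.cross_of_not_cross hij hji (hf j))⟩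

theorem isFerrers_singleton (e : V × V) : IsFerrers fun u v => (u, v) = e := by
  intro u u'
  by_cases hu : u = e.1
  · right
    rintro v rfl
    exact Prod.ext hu rfl
  · left
    rintro v rfl
    exact absurd rfl hu

/-- The family `F` of Ferrers digraphs partitions the edges of the complement of `E`; the members
may be empty. -/
structure IsFerrersPartition {K : Type*} (F : K → V → V → Prop) (E : V → V → Prop) : Prop where
  isFerrers : ∀ α, IsFerrers (F α)
  disjoint : ∀ α β, α ≠ β → ∀ u v, ¬ (F α u v ∧ F β u v)
  compl_iff : ∀ u v, ¬ E u v ↔ ∃ α, F α u v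

theorem isFerrersPartition_singletons (E : V → V → Prop) :
    IsFerrersPartition (fun (e : {e : V × V // ¬ E e.1 e.2}) u v => (u, v) = e.1) E where
  isFerrers e := isFerrers_singleton e.1
  disjoint _ _ hne _ _ h := hne (Subtype.ext (h.1.symm.trans h.2))
  compl_iff u v := by simp

namespace IsFerrersPartition

variable {K : Type*} {F : K → V → V → Prop} {E : V → V → Prop}

theorem comp_equiv {K' : Type*} (hF : IsFerrersPartition F E) (e : K' ≃ K) :
    IsFerrersPartition (fun α => F (e α)) E where
  isFerrers α := hF.isFerrers (e α)
  disjoint _ _ hne := hF.disjoint _ _ (e.injective.ne hne)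
  compl_iff u v := (hF.compl_iff u v).trans e.surjective.exists

theorem not_rel_of_rel (hF : IsFerrersPartition F E) {u v : V} (huv : E u v) (α : K) : ¬ F α u v :=
  fun h => (hF.compl_iff u v).2 ⟨α, h⟩ huv

theorem exists_pair_common_out_common_in [Fintype K] {ι : Type*} [Fintype ι]
    (hF : IsFerrersPartition F E) {f : ι → V} (hf : ∀ i j, E (f i) (f j) ↔ i = j)
    (hcard : 3 * (Fintype.card K).factorial ≤ 2 * Fintype.card ι) :
    ∃ P : Finset K, P.card = 2 ∧ (∃ i, ∀ α ∈ P, ∃ j, F α (f i) (f j)) ∧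
      ∃ j, ∀ α ∈ P, ∃ i, F α (f i) (f j) := by
  have hasymm (α : K) : Std.Asymm fun i j => F α (f i) (f j) :=
    (hF.isFerrers α).asymm_comap_of_irrefl fun i => hF.not_rel_of_rel ((hf i i).2 rfl) α
  have hcov : ((Finset.univ : Finset ι) : Set ι).Pairwise
      fun i j => ∃ α ∈ Finset.univ, F α (f i) (f j) := fun i _ j _ hij => by
    simpa using (hF.compl_iff _ _).1 (mt (hf i j).1 hij)
  obtain ⟨P, -, hP⟩ := exists_pair_common_out_common_in_of_asymm hasymm hcov hcard
  exact ⟨P, hP⟩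

theorem subsingleton_of_common_out_of_common_in {ι κ : Type*} (hF : IsFerrersPartition F E)
    {a : ι → V} {b : κ → V} (hba : ∀ j i, E (b j) (a i)) {P : Set K} {x y : V}
    (hx : ∀ α ∈ P, ∃ i, F α x (a i)) (hy : ∀ α ∈ P, ∃ j, F α (b j) y) : P.Subsingleton := by
  have hxy (α) (hα : α ∈ P) : F α x y := by
    obtain ⟨i, hi⟩ := hx α hα
    obtain ⟨j, hj⟩ := hy α hα
    exact (hF.isFerrers α).cross_of_not_cross hi hj (hF.not_rel_of_rel (hba j i) α)
  intro α hα β hβ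
  by_contra hne
  exact hF.disjoint α β hne x y ⟨hxy α hα, hxy β hβ⟩

theorem card_le_choose_two [Fintype K] {I ι : Type*} [Fintype I] [Fintype ι]
    (hF : IsFerrersPartition F E) {f : I → ι → V} (hdiag : ∀ r i j, E (f r i) (f r j) ↔ i = j)
    (hoff : Pairwise fun r s => (∀ i j, E (f r i) (f s j)) ∨ ∀ i j, E (f s i) (f r j))
    (hcard : 3 * (Fintype.card K).factorial ≤ 2 * Fintype.card ι) :
    Fintype.card I ≤ (Fintype.card K).choose 2 := by
  choose P hP hout hin using fun r => hF.exists_pair_common_out_common_in (hdiag r) hcard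
  have hPnot (r) : ¬ (P r : Set K).Subsingleton := by
    rw [Set.not_subsingleton_iff]
    exact Finset.one_lt_card_iff_nontrivial.1 (by rw [hP r]; exact one_lt_two)
  have hPinj : Function.Injective P := by
    intro r s hrs
    obtain ⟨i, hi⟩ := hout r
    obtain ⟨j, hj⟩ := hin r
    obtain ⟨i', hi'⟩ := hout s
    obtain ⟨j', hj'⟩ := hin s
    rw [← hrs] at hi' hj'
    by_contra hne
    obtain hup | hdown := hoff hne
    · exact hPnot r (hF.subsingleton_of_common_out_of_common_in hup hi' hj)
    · exact hPnot r (hF.subsingleton_of_common_out_of_common_in hdown hi hj')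
  calc Fintype.card I = (Finset.univ : Finset I).card := rfl
    _ ≤ (Finset.univ.powersetCard 2).card :=
      Finset.card_le_card_of_injOn P (by simp [Set.MapsTo, hP]) hPinj.injOn
    _ = (Fintype.card K).choose 2 := Finset.card_powersetCard 2 _

end IsFerrersPartition

theorem fstar_eq_sInf_isFerrersPartition (E : V → V → Prop) :
    fstar E = sInf {k | ∃ F : Fin k → V → V → Prop, IsFerrersPartition F E} :=
  congrArg sInf <| Set.ext fun _ => exists_congr fun _ =>
    ⟨fun ⟨hferrers, hdisj, hcompl⟩ => ⟨hferrers, hdisj, hcompl⟩,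
      fun hF => ⟨hF.isFerrers, hF.disjoint, hF.compl_iff⟩⟩

theorem exists_isFerrersPartition_fstar [Finite V] (E : V → V → Prop) :
    ∃ F : Fin (fstar E) → V → V → Prop, IsFerrersPartition F E := by
  rw [fstar_eq_sInf_isFerrersPartition]
  have hne : {k | ∃ F : Fin k → V → V → Prop, IsFerrersPartition F E}.Nonempty :=
    ⟨_, _, (isFerrersPartition_singletons E).comp_equiv (Finite.equivFin _).symm⟩
  exact Nat.sInf_mem hne

end Ferrers

theorem stmt_10_general {V : Type} [Finite V] {I ι : Type*} [Fintype I] [Fintype ι]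
    {E : V → V → Prop} {f : I → ι → V} (hdiag : ∀ r i j, E (f r i) (f r j) ↔ i = j)
    (hoff : Pairwise fun r s => (∀ i j, E (f r i) (f s j)) ∨ ∀ i j, E (f s i) (f r j))
    {c : ℕ} (hI : c.choose 2 < Fintype.card I)
    (hι : 3 * c.factorial ≤ 2 * Fintype.card ι) :
    c < fstar E := by
  by_contra! hle
  obtain ⟨F, hF⟩ := exists_isFerrersPartition_fstar E
  have hcard : 3 * (Fintype.card (Fin (fstar E))).factorial ≤ 2 * Fintype.card ι := by
    rw [Fintype.card_fin]
    exact (Nat.mul_le_mul_left 3 (Nat.factorial_le hle)).trans hι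
  have hblocks := hF.card_le_choose_two hdiag hoff hcard
  rw [Fintype.card_fin] at hblocks
  exact (hblocks.trans (Nat.choose_le_choose 2 hle)).not_gt hI

/-- For `c ≥ 2`, `k ≥ 1 + C(c,2)`, and `m ≥ 3·c!/2`, the digraph
`M_{k,m}` satisfies `f*(M_{k,m}) > c`. -/
theorem stmt_10 (c k m : ℕ) (hc : 2 ≤ c) (hk : 1 + c.choose 2 ≤ k)
    (hm : 3 * Nat.factorial c / 2 ≤ m) :
    c < fstar (MkmRel k m) := by
  have heven : 2 ∣ c.factorial := Nat.dvd_factorial two_pos hc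
  refine stmt_10_general (f := fun (r : Fin k) (i : Fin m) => (r, i)) (by simp [MkmRel]) ?_
    (by rw [Fintype.card_fin]; lia) (by rw [Fintype.card_fin]; lia)
  exact fun r s hrs => hrs.lt_or_gt.imp (fun h _ _ => .inl h) fun h _ _ => .inl h
end

section
/- For all k ≥ 1 and m ≥ 2, the digraph M_{k,m} has Ferrers dimension f(M_{k,m}) = 2, where M_{k,m} is the digraph on km vertices indexed by pairs (r,i) with 1 ≤ r ≤ k and 1 ≤ i ≤ m, with ((r,i),(s,j)) ∈ E(M_{k,m}) iff r < s, or r = s and i = j (block adjacency matrix with identity diagonal blocks, all-1 blocks above the diagonal, and all-0 blocks below the diagonal). -/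
/-! `M_{k,m}` is the intersection of two linear orders on the pairs `(r, i)`: the lexicographic
order, and the lexicographic order with the second coordinate reversed. A linear order is Ferrers,
so the dimension is at most `2`. A reflexive Ferrers digraph is total, whereas `(r, i)` and `(r, j)`
with `i ≠ j` are not joined in either direction, so the dimension is not `1` or `0`. -/

lemma isFerrers_le {V : Type} {α : Type*} [LinearOrder α] (f g : V → α) :
    IsFerrers fun u v ↦ f u ≤ g v := fun u u' ↦
  (le_total (f u') (f u)).imp (fun h _ ↦ h.trans) (fun h _ ↦ h.trans)

lemma IsFerrers.total_of_refl {V : Type} {E : V → V → Prop} (hE : IsFerrers E)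
    (hrefl : ∀ v, E v v) (u v : V) : E u v ∨ E v u :=
  (hE v u).imp (fun h ↦ h (hrefl v)) (fun h ↦ h (hrefl u))

lemma isFerrers_forall_of_subsingleton {V : Type} {ι : Sort*} [Subsingleton ι]
    {F : ι → V → V → Prop} (hF : ∀ i, IsFerrers (F i)) :
    IsFerrers fun u v ↦ ∀ i, F i u v := by
  rcases isEmpty_or_nonempty ι with _ | ⟨⟨i⟩⟩
  · exact fun _ _ ↦ .inl fun _ _ ↦ isEmptyElim
  · have := uniqueOfSubsingleton i
    simpa only [Unique.forall_iff] using hF default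

lemma ferrersDim_and_eq_two {V : Type} {F G : V → V → Prop} (hF : IsFerrers F)
    (hG : IsFerrers G) (hFG : ¬ IsFerrers fun u v ↦ F u v ∧ G u v) :
    ferrersDim (fun u v ↦ F u v ∧ G u v) = 2 := by
  refine IsLeast.csInf_eq ⟨⟨![F, G], Fin.forall_fin_two.2 ⟨hF, hG⟩, ?_⟩, ?_⟩
  · simp only [Fin.forall_fin_two, Matrix.cons_val_zero, Matrix.cons_val_one, implies_true]
  · rintro n ⟨H, hH, hFGH⟩
    by_contra! hn
    have : Subsingleton (Fin n) := Fin.subsingleton_iff_le_one.2 (Nat.le_of_lt_succ hn)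
    apply hFG
    simpa only [hFGH] using isFerrers_forall_of_subsingleton hH

lemma toLex_le_and_toLex_toDual_le_iff {α β : Type*} [LT α] [PartialOrder β]
    (p q : α × β) :
    toLex p ≤ toLex q ∧
        toLex (p.1, OrderDual.toDual p.2) ≤ toLex (q.1, OrderDual.toDual q.2) ↔
      p.1 < q.1 ∨ p.1 = q.1 ∧ p.2 = q.2 := by
  simp only [Prod.Lex.toLex_le_toLex, OrderDual.toDual_le_toDual, ← or_and_left,
    ← and_and_left, ← le_antisymm_iff]

lemma not_isFerrers_fst_lt_or_eq {α β : Type} [Preorder α] [Nonempty α] [Nontrivial β] :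
    ¬ IsFerrers fun p q : α × β ↦ p.1 < q.1 ∨ p.1 = q.1 ∧ p.2 = q.2 := by
  intro h
  obtain ⟨a⟩ := ‹Nonempty α›
  obtain ⟨b, c, hbc⟩ := exists_pair_ne β
  simpa [hbc, hbc.symm] using h.total_of_refl (fun _ ↦ .inr ⟨rfl, rfl⟩) (a, b) (a, c)

theorem stmt_11_general (α β : Type) [LinearOrder α] [Nonempty α] [Nontrivial β] :
    ferrersDim (fun p q : α × β ↦ p.1 < q.1 ∨ p.1 = q.1 ∧ p.2 = q.2) = 2 := by
  -- The relation does not involve an order on `β`, so any linear order will do.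
  obtain ⟨_, -⟩ := exists_wellFoundedLT β
  have not_ferrers := not_isFerrers_fst_lt_or_eq (α := α) (β := β)
  simp only [← toLex_le_and_toLex_toDual_le_iff] at not_ferrers ⊢
  exact ferrersDim_and_eq_two (isFerrers_le _ _) (isFerrers_le _ _) not_ferrers

/-- For `k ≥ 1` and `m ≥ 2`, the digraph `M_{k,m}` has Ferrers
dimension exactly 2. -/
theorem stmt_11 (k m : ℕ) (hk : 1 ≤ k) (hm : 2 ≤ m) :
    ferrersDim (MkmRel k m) = 2 := by
  have : Nonempty (Fin k) := ⟨⟨0, hk⟩⟩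
  have : Nontrivial (Fin m) := Fin.nontrivial_iff_two_le.2 hm
  exact stmt_11_general (Fin k) (Fin m)
end

section
/- Let c ≥ 2 and 1 ≤ k ≤ C(c,2) (where C(c,2) = c(c−1)/2). Then for every m ≥ 1, f*(M_{k,m}) ≤ c, where M_{k,m} is the digraph on km vertices indexed by pairs (r,i) with 1 ≤ r ≤ k and 1 ≤ i ≤ m, with ((r,i),(s,j)) ∈ E(M_{k,m}) iff r < s, or r = s and i = j (block adjacency matrix with identity diagonal blocks, all-1 blocks above the diagonal, and all-0 blocks below the diagonal). -/
/-!
Label each block by a pair of colours `lo < hi`, in colexicographic order, so that `hi` is monotone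
along the blocks; `c` colours provide `c.choose 2` labels. A non-edge out of block `r` gets colour
`hi r` if it goes lexicographically down to a block with the same larger colour, and `lo r`
otherwise. In colour `i`, the rows with `hi = i` are nested by the lexicographic order and lie
inside those with `lo = i`, which see every block of smaller `hi`. The latter come from blocks with
distinct values of `hi`, hence are nested by `hi` between blocks; within a block they shrink as the
row index grows.
-/

/-- An assignment of two colours `lo r < hi r` to each block `r`, such that `hi` is monotone and
distinct blocks receive distinct pairs. It determines the colouring `nonEdgeColour`. -/
structure IsMonotonePairLabelling {α ι : Type*} [Preorder α] [Preorder ι]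
    (lo hi : α → ι) : Prop where
  lt : ∀ r, lo r < hi r
  monotone : Monotone hi
  injective : Function.Injective fun r => (lo r, hi r)

theorem exists_isMonotonePairLabelling {α ι : Type*} [LinearOrder α] [Fintype α] [LinearOrder ι]
    [Fintype ι] (h : Fintype.card α ≤ (Fintype.card ι).choose 2) :
    ∃ lo hi : α → ι, IsMonotonePairLabelling lo hi := by
  -- Pairs are stored as `(hi, lo)`, so that the lexicographic order compares `hi` first.
  let pairs : Finset (ι ×ₗ ι) :=
    ({p : ι × ι | p.1 < p.2} : Finset (ι × ι)).map
      ((Equiv.prodComm ι ι).trans toLex).toEmbedding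
  have hpairs : Fintype.card α ≤ pairs.card := by
    rwa [Finset.card_map, Fintype.card_product_filter_lt]
  let e : α ↪o ι ×ₗ ι :=
    (monoEquivOfFin α rfl).symm.toOrderEmbedding.trans (pairs.orderEmbOfCardLe hpairs)
  have he (r : α) : e r ∈ pairs := pairs.orderEmbOfCardLe_mem hpairs _
  refine ⟨fun r => (ofLex (e r)).2, fun r => (ofLex (e r)).1, fun r => ?_, ?_, fun r s hrs => ?_⟩
  · obtain ⟨p, hp, hpe⟩ := Finset.mem_map.mp (he r)
    rw [← hpe]
    exact (Finset.mem_filter.mp hp).2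
  · exact Prod.Lex.monotone_fst_ofLex.comp e.monotone
  · exact e.injective (ofLex.injective (Prod.swap_injective hrs))

theorem fstar_le_of_colouring {V : Type} {E : V → V → Prop} {c : ℕ} (colour : V → V → Fin c)
    (h : ∀ i, IsFerrers fun u v => ¬ E u v ∧ colour u v = i) : fstar E ≤ c := by
  refine Nat.sInf_le ⟨fun i u v => ¬ E u v ∧ colour u v = i, h, ?_, ?_⟩
  · rintro i j hij u v ⟨⟨-, hi⟩, -, hj⟩
    exact hij (hi.symm.trans hj)
  · exact fun u v => by simp only [exists_and_left, exists_eq', and_true]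

section BlockColouring

variable {α β ι : Type*}

/-- The colour of the non-edge from `u` to `v` in the block digraph `Prod.Lex (· < ·) (· = ·)` whose
blocks are labelled by `lo` and `hi`. Its values on edges are irrelevant. -/
def nonEdgeColour [LinearOrder α] [LinearOrder β] [DecidableEq ι] (lo hi : α → ι)
    (u v : α × β) : ι :=
  if hi v.1 = hi u.1 ∧ toLex v < toLex u then hi u.1 else lo u.1

/-- The successors of `u` along the non-edges coloured `hi u.1`. -/
def hiSuccessors [LT α] [LT β] (hi : α → ι) (u : α × β) : Set (α × β) :=
  {v | hi v.1 = hi u.1 ∧ toLex v < toLex u}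

/-- The successors of `u` along the non-edges coloured `lo u.1`. -/
def loSuccessors [LT β] [LT ι] (hi : α → ι) (u : α × β) : Set (α × β) :=
  {v | hi v.1 < hi u.1 ∨ v.1 = u.1 ∧ u.2 < v.2}

theorem hiSuccessors_subset_hiSuccessors [Preorder α] [Preorder β] {hi : α → ι} {u u' : α × β}
    (hhi : hi u.1 = hi u'.1) (hle : toLex u ≤ toLex u') :
    hiSuccessors hi u ⊆ hiSuccessors hi u' :=
  fun _ hv => ⟨hv.1.trans hhi, hv.2.trans_le hle⟩

theorem hiSuccessors_subset_loSuccessors [LT α] [LT β] [Preorder ι] {hi : α → ι} {u u' : α × β}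
    (hlt : hi u.1 < hi u'.1) : hiSuccessors hi u ⊆ loSuccessors hi u' :=
  fun _ hv => .inl (hv.1.trans_lt hlt)

theorem loSuccessors_subset_loSuccessors_of_lt [LT β] [Preorder ι] {hi : α → ι} {u u' : α × β}
    (hlt : hi u.1 < hi u'.1) : loSuccessors hi u ⊆ loSuccessors hi u' := by
  rintro v (hv | ⟨hv, -⟩)
  · exact .inl (hv.trans hlt)
  · exact .inl (hv ▸ hlt)

theorem loSuccessors_subset_loSuccessors_of_le [Preorder β] [LT ι] {hi : α → ι} {u u' : α × β}
    (hblock : u.1 = u'.1) (hle : u'.2 ≤ u.2) : loSuccessors hi u ⊆ loSuccessors hi u' := by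
  rintro v (hv | ⟨hv, hlt⟩)
  · exact .inl (hblock ▸ hv)
  · exact .inr ⟨hv.trans hblock, hle.trans_lt hlt⟩

theorem hiSuccessors_subset_or_subset [LinearOrder α] [LinearOrder β] {hi : α → ι} {u u' : α × β}
    (hhi : hi u.1 = hi u'.1) :
    hiSuccessors hi u ⊆ hiSuccessors hi u' ∨ hiSuccessors hi u' ⊆ hiSuccessors hi u :=
  (le_total (toLex u) (toLex u')).imp (hiSuccessors_subset_hiSuccessors hhi)
    (hiSuccessors_subset_hiSuccessors hhi.symm)

theorem loSuccessors_subset_or_subset [LinearOrder β] [LinearOrder ι] {lo hi : α → ι}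
    (hinj : Function.Injective fun r => (lo r, hi r)) {u u' : α × β} (hlo : lo u.1 = lo u'.1) :
    loSuccessors hi u ⊆ loSuccessors hi u' ∨ loSuccessors hi u' ⊆ loSuccessors hi u := by
  rcases lt_trichotomy (hi u.1) (hi u'.1) with hlt | heq | hgt
  · exact .inl (loSuccessors_subset_loSuccessors_of_lt hlt)
  · have hblock : u.1 = u'.1 := hinj (Prod.ext hlo heq)
    exact (le_total u'.2 u.2).imp (loSuccessors_subset_loSuccessors_of_le hblock)
      (loSuccessors_subset_loSuccessors_of_le hblock.symm)
  · exact .inr (loSuccessors_subset_loSuccessors_of_lt hgt)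

theorem disjoint_hiSuccessors_loSuccessors [Preorder α] [Preorder β] [Preorder ι] (hi : α → ι)
    (u : α × β) : Disjoint (hiSuccessors hi u) (loSuccessors hi u) := by
  refine Set.disjoint_left.mpr ?_
  rintro v ⟨heq, hlex⟩ (hlt | ⟨hblock, hlt⟩)
  · exact hlt.ne heq
  · rcases Prod.Lex.toLex_lt_toLex.mp hlex with h | ⟨-, h⟩
    · exact h.ne hblock
    · exact lt_asymm h hlt

theorem not_lex_iff_mem_hiSuccessors_or_mem_loSuccessors [LinearOrder α] [LinearOrder β]
    [PartialOrder ι] {hi : α → ι} (hmono : Monotone hi) (u v : α × β) :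
    ¬ Prod.Lex (· < ·) (· = ·) u v ↔ v ∈ hiSuccessors hi u ∨ v ∈ loSuccessors hi u := by
  have hdown (h : v.1 < u.1) : hi v.1 < hi u.1 ∨ hi v.1 = hi u.1 := (hmono h.le).lt_or_eq
  have hreflect : hi v.1 < hi u.1 → v.1 < u.1 := hmono.reflect_lt
  simp only [Prod.lex_def, hiSuccessors, loSuccessors, Set.mem_ofPred_eq, Prod.Lex.toLex_lt_toLex]
  grind

theorem not_lex_and_nonEdgeColour_eq_iff [LinearOrder α] [LinearOrder β] [LinearOrder ι]
    {lo hi : α → ι} (hmono : Monotone hi) (u v : α × β) (i : ι) :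
    ¬ Prod.Lex (· < ·) (· = ·) u v ∧ nonEdgeColour lo hi u v = i ↔
      hi u.1 = i ∧ v ∈ hiSuccessors hi u ∨ lo u.1 = i ∧ v ∈ loSuccessors hi u := by
  rw [not_lex_iff_mem_hiSuccessors_or_mem_loSuccessors hmono]
  by_cases hv : v ∈ hiSuccessors hi u
  · have hcolour : nonEdgeColour lo hi u v = hi u.1 := if_pos hv
    have hv' : v ∉ loSuccessors hi u :=
      Set.disjoint_left.mp (disjoint_hiSuccessors_loSuccessors hi u) hv
    simp [hcolour, hv, hv']
  · have hcolour : nonEdgeColour lo hi u v = lo u.1 := if_neg hv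
    simp [hcolour, hv, and_comm]

theorem IsMonotonePairLabelling.successors_nonEdgeColour_cases [LinearOrder α] [LinearOrder β]
    [LinearOrder ι] {lo hi : α → ι} (h : IsMonotonePairLabelling lo hi) (u : α × β) (i : ι) :
    let S := {v | ¬ Prod.Lex (· < ·) (· = ·) u v ∧ nonEdgeColour lo hi u v = i}
    hi u.1 = i ∧ S = hiSuccessors hi u ∨ lo u.1 = i ∧ S = loSuccessors hi u ∨ S = ∅ := by
  simp only [not_lex_and_nonEdgeColour_eq_iff h.monotone]
  by_cases hhi : hi u.1 = i
  · have hlo : lo u.1 ≠ i := ((h.lt u.1).trans_eq hhi).ne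
    simp [hhi, hlo]
  · by_cases hlo : lo u.1 = i <;> simp [hhi, hlo]

end BlockColouring

theorem IsMonotonePairLabelling.isFerrers_nonEdgeColour {α β : Type} {ι : Type*} [LinearOrder α]
    [LinearOrder β] [LinearOrder ι] {lo hi : α → ι} (h : IsMonotonePairLabelling lo hi) (i : ι) :
    IsFerrers fun u v : α × β =>
      ¬ Prod.Lex (· < ·) (· = ·) u v ∧ nonEdgeColour lo hi u v = i := by
  intro u u'
  rcases h.successors_nonEdgeColour_cases u i with ⟨hi_u, hS⟩ | ⟨lo_u, hS⟩ | hS <;>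
    rcases h.successors_nonEdgeColour_cases u' i with ⟨hi_u', hS'⟩ | ⟨lo_u', hS'⟩ | hS' <;>
    rw [hS, hS']
  · exact hiSuccessors_subset_or_subset (hi_u.trans hi_u'.symm)
  · exact .inl (hiSuccessors_subset_loSuccessors ((hi_u.trans lo_u'.symm).trans_lt (h.lt u'.1)))
  · exact .inr (Set.empty_subset _)
  · exact .inr (hiSuccessors_subset_loSuccessors ((hi_u'.trans lo_u.symm).trans_lt (h.lt u.1)))
  · exact loSuccessors_subset_or_subset h.injective (lo_u.trans lo_u'.symm)
  · exact .inr (Set.empty_subset _)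
  all_goals exact .inl (Set.empty_subset _)

theorem mkmRel_eq_lex (k m : ℕ) : MkmRel k m = Prod.Lex (· < ·) (· = ·) := by
  funext p q
  exact propext Prod.lex_def.symm

theorem stmt_12_general {α β : Type} [LinearOrder α] [Fintype α] {c : ℕ}
    (hcard : Fintype.card α ≤ c.choose 2) :
    fstar (Prod.Lex (· < ·) (· = ·) : α × β → α × β → Prop) ≤ c := by
  obtain ⟨lo, hi, h⟩ : ∃ lo hi : α → Fin c, IsMonotonePairLabelling lo hi :=
    exists_isMonotonePairLabelling (by rwa [Fintype.card_fin])
  -- The digraph does not depend on an order on `β`, but the colouring does.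
  obtain ⟨_, _⟩ := exists_wellFoundedLT β
  exact fstar_le_of_colouring (nonEdgeColour lo hi) h.isFerrers_nonEdgeColour

/-- For `c ≥ 2` and `1 ≤ k ≤ C(c,2)`, for every `m ≥ 1` we have
`f*(M_{k,m}) ≤ c`. -/
theorem stmt_12 (c k m : ℕ) (hc : 2 ≤ c) (hk1 : 1 ≤ k) (hk2 : k ≤ c.choose 2)
    (hm : 1 ≤ m) :
    fstar (MkmRel k m) ≤ c := by
  rw [mkmRel_eq_lex]
  exact stmt_12_general (by rwa [Fintype.card_fin])
end

section
/- For every digraph D with w(P(D)) ≥ 2, the catch leafage satisfies l*(D) ≤ w(P(D)). -/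
/-!
By Dilworth's theorem the predecessor sets of `D` split into `w` chains, where `w` is the width of
`P(D)`. Lay each chain along a leg of a spider with `w` legs, larger sets closer to the body, and
let the sink set of `v` be the position of its predecessor set. For each `u`, the predecessor sets
containing `u` form an initial segment of each chain, so the sink vertices of the successors of `u`
are reached from the body by a subtree meeting no other sink vertex. As `w ≥ 2`, the body is not a
leaf, and the spider has at most `w` leaves.
-/

section Dilworth

variable {α : Type*} [Preorder α] {s t : Finset α} {k i j : ℕ} {c : α → ℕ} {a x y : α}

/-- The width of `s` is at most `k`: every antichain contained in `s` has at most `k` elements. -/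
def HasWidthLE (s : Finset α) (k : ℕ) : Prop :=
  ∀ ⦃t : Finset α⦄, t ⊆ s → IsAntichain (· ≤ ·) (t : Set α) → t.card ≤ k

/-- The predicate that `t` is an antichain with exactly `k` elements contained in `s`. -/
structure IsNAntichainOn (s : Finset α) (k : ℕ) (t : Finset α) : Prop where
  subset : t ⊆ s
  isAntichain : IsAntichain (· ≤ ·) (t : Set α)
  card_eq : t.card = k

/-- A partition of `s` into `k` chains, encoded as a colouring of the ambient type by natural
numbers whose values outside `s` are irrelevant. -/
structure IsChainColoring (s : Finset α) (k : ℕ) (c : α → ℕ) : Prop where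
  lt : ∀ ⦃x⦄, x ∈ s → c x < k
  total : ∀ ⦃x⦄, x ∈ s → ∀ ⦃y⦄, y ∈ s → c x = c y → x ≤ y ∨ y ≤ x

/-- The elements of colour `i` lying on some `k`-element antichain of `s`. In the proof of
Dilworth's theorem, where `k` is the width of `s`, the greatest such element of each colour is
used. -/
def antichainPoints (s : Finset α) (k : ℕ) (c : α → ℕ) (i : ℕ) : Set α :=
  {x | c x = i ∧ ∃ t, IsNAntichainOn s k t ∧ x ∈ t}

theorem antichainPoints_subset : antichainPoints s k c i ⊆ s :=
  fun _ ⟨_, _, ht, hx⟩ => ht.subset hx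

theorem HasWidthLE.of_forall_not_isNAntichainOn (hs : HasWidthLE s (k + 1))
    (h : ∀ t, ¬ IsNAntichainOn s (k + 1) t) : HasWidthLE s k := fun t hts ht =>
  Nat.le_of_lt_succ <| (hs hts ht).lt_of_ne fun hcard => h t ⟨hts, ht, hcard⟩

namespace IsChainColoring

theorem extend [DecidableEq α] {K : Finset α} (hc : IsChainColoring (s \ K) k c)
    (hK : IsChain (· ≤ ·) (K : Set α)) :
    IsChainColoring s (k + 1) fun x => if x ∈ K then k else c x := by
  have lt_of_notMem : ∀ ⦃x⦄, x ∈ s → x ∉ K → c x < k := fun x hx hxK =>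
    hc.lt (Finset.mem_sdiff.2 ⟨hx, hxK⟩)
  refine ⟨fun x hx => ?_, fun x hx y hy hxy => ?_⟩
  · split_ifs with hxK
    · exact k.lt_succ_self
    · exact (lt_of_notMem hx hxK).trans k.lt_succ_self
  · split_ifs at hxy with hxK hyK hyK
    · exact hK.total hxK hyK
    · exact absurd hxy (lt_of_notMem hy hyK).ne'
    · exact absurd hxy (lt_of_notMem hx hxK).ne
    · exact hc.total (Finset.mem_sdiff.2 ⟨hx, hxK⟩) (Finset.mem_sdiff.2 ⟨hy, hyK⟩) hxy

theorem injOn_of_isAntichain (hc : IsChainColoring s k c) (hts : t ⊆ s)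
    (ht : IsAntichain (· ≤ ·) (t : Set α)) : Set.InjOn c t := by
  intro x hx y hy hxy
  rcases hc.total (hts hx) (hts hy) hxy with h | h
  · exact ht.eq hx hy h
  · exact ht.eq' hx hy h

theorem exists_mem_eq (hc : IsChainColoring s k c) (ht : IsNAntichainOn s k t) (hi : i < k) :
    ∃ x ∈ t, c x = i := by
  have hmaps : Set.MapsTo c t (Finset.range k) := fun x hx =>
    Finset.mem_coe.2 (Finset.mem_range.2 (hc.lt (ht.subset hx)))
  exact Finset.surjOn_of_injOn_of_card_le c hmaps
    (hc.injOn_of_isAntichain ht.subset ht.isAntichain) (by simp [ht.card_eq])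
    (by simpa using hi)

theorem exists_isGreatest_antichainPoints (hc : IsChainColoring s k c)
    (ht : IsNAntichainOn s k t) (hi : i < k) :
    ∃ x, IsGreatest (antichainPoints s k c i) x := by
  obtain ⟨x, hxt, hxi⟩ := hc.exists_mem_eq ht hi
  obtain ⟨m, hm⟩ := (s.finite_toSet.subset antichainPoints_subset).exists_maximal
    ⟨x, (⟨hxi, t, ht, hxt⟩ : x ∈ antichainPoints s k c i)⟩
  refine ⟨m, hm.prop, fun y hy => ?_⟩
  rcases hc.total (antichainPoints_subset hy) (antichainPoints_subset hm.prop)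
    (hy.1.trans hm.prop.1.symm) with h | h
  · exact h
  · exact hm.le_of_ge hy h

theorem eq_of_isGreatest_antichainPoints_of_le (hc : IsChainColoring s k c) (hi : i < k)
    (hx : IsGreatest (antichainPoints s k c i) x) (hy : IsGreatest (antichainPoints s k c j) y)
    (hxy : x ≤ y) : i = j := by
  obtain ⟨hyj, t, ht, hyt⟩ := hy.1
  obtain ⟨z, hzt, hzi⟩ := hc.exists_mem_eq ht hi
  have hzy : z = y := ht.isAntichain.eq hzt hyt ((hx.2 ⟨hzi, t, ht, hzt⟩).trans hxy)
  rw [← hzi, hzy, hyj]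

variable [DecidableEq α]

/- Otherwise `a` together with the greatest points of the `k` colours would be an antichain with
`k + 1` elements. -/
theorem exists_isGreatest_antichainPoints_le (ha : Maximal (· ∈ s) a) (hs : HasWidthLE s k)
    (hc : IsChainColoring (s.erase a) k c) (ht : IsNAntichainOn (s.erase a) k t) :
    ∃ i < k, ∃ x, IsGreatest (antichainPoints (s.erase a) k c i) x ∧ x ≤ a := by
  choose top htop using fun i : Fin k => hc.exists_isGreatest_antichainPoints ht i.2
  by_contra! hle
  have top_mem (i : Fin k) : top i ∈ s.erase a := antichainPoints_subset (htop i).1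
  have not_le_top (i : Fin k) : ¬ a ≤ top i := fun h =>
    hle i i.2 _ (htop i) (ha.2 (Finset.mem_of_mem_erase (top_mem i)) h)
  have eq_of_top_le {i j : Fin k} (h : top i ≤ top j) : i = j :=
    Fin.ext (hc.eq_of_isGreatest_antichainPoints_of_le i.2 (htop i) (htop j) h)
  have hanti : IsAntichain (· ≤ ·) ((insert a (Finset.univ.image top) : Finset α) : Set α) := by
    rw [Finset.coe_insert, Finset.coe_image, Finset.coe_univ, Set.image_univ]
    refine IsAntichain.insert ?_ ?_ ?_
    · rintro _ ⟨i, rfl⟩ _ ⟨j, rfl⟩ hne h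
      exact hne (congrArg top (eq_of_top_le h))
    · rintro _ ⟨i, rfl⟩ -
      exact hle i i.2 _ (htop i)
    · rintro _ ⟨i, rfl⟩ -
      exact not_le_top i
  have hsub : insert a (Finset.univ.image top) ⊆ s :=
    Finset.insert_subset ha.prop <| Finset.image_subset_iff.2 fun i _ =>
      Finset.mem_of_mem_erase (top_mem i)
  have hnotMem : a ∉ Finset.univ.image top := by
    simpa using fun i (h : top i = a) => not_le_top i h.ge
  have hcard := hs hsub hanti
  rw [Finset.card_insert_of_notMem hnotMem,
    Finset.card_image_of_injective _ fun i j h => eq_of_top_le h.le, Finset.card_fin] at hcard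
  exact k.lt_irrefl hcard

theorem exists_isChain_hasWidthLE_sdiff (ha : Maximal (· ∈ s) a) (hs : HasWidthLE s (k + 1))
    (hc : IsChainColoring (s.erase a) (k + 1) c) :
    ∃ K : Finset α, a ∈ K ∧ IsChain (· ≤ ·) (K : Set α) ∧ HasWidthLE (s \ K) k := by
  classical
  suffices ∃ K : Finset α, a ∈ K ∧ IsChain (· ≤ ·) (K : Set α) ∧
      ∀ t, IsNAntichainOn (s.erase a) (k + 1) t → ∃ y ∈ t, y ∈ K by
    obtain ⟨K, haK, hK, hmeet⟩ := this
    have hsub : s \ K ⊆ s.erase a := fun y hy => Finset.mem_erase.2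
      ⟨fun h => (Finset.mem_sdiff.1 hy).2 (h ▸ haK), (Finset.mem_sdiff.1 hy).1⟩
    refine ⟨K, haK, hK, HasWidthLE.of_forall_not_isNAntichainOn
      (fun t ht => hs (ht.trans Finset.sdiff_subset)) fun t ht => ?_⟩
    obtain ⟨y, hyt, hyK⟩ := hmeet t ⟨ht.subset.trans hsub, ht.isAntichain, ht.card_eq⟩
    exact (Finset.mem_sdiff.1 (ht.subset hyt)).2 hyK
  by_cases hex : ∃ t, IsNAntichainOn (s.erase a) (k + 1) t
  · obtain ⟨t, ht⟩ := hex
    obtain ⟨i, hi, x, hx, hxa⟩ := exists_isGreatest_antichainPoints_le ha hs hc ht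
    refine ⟨insert a {y ∈ s.erase a | c y = i ∧ y ≤ x}, Finset.mem_insert_self _ _, ?_,
      fun t ht => ?_⟩
    · rw [Finset.coe_insert]
      refine IsChain.insert (fun y hy z hz _ => ?_) fun y hy _ => ?_
      · obtain ⟨hys, hyi, -⟩ := Finset.mem_filter.1 hy
        obtain ⟨hzs, hzi, -⟩ := Finset.mem_filter.1 hz
        exact hc.total hys hzs (hyi.trans hzi.symm)
      · exact Or.inr ((Finset.mem_filter.1 hy).2.2.trans hxa)
    · obtain ⟨y, hyt, hyi⟩ := hc.exists_mem_eq ht hi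
      exact ⟨y, hyt, Finset.mem_insert_of_mem <| Finset.mem_filter.2
        ⟨ht.subset hyt, hyi, hx.2 ⟨hyi, t, ht, hyt⟩⟩⟩
  · exact ⟨{a}, Finset.mem_singleton_self a, by simp, fun t ht => absurd ⟨t, ht⟩ hex⟩

end IsChainColoring

/- Galvin's proof of Dilworth's theorem: remove a maximal element `a`, colour the rest by induction,
and use this colouring to find a chain through `a` whose removal lowers the width. -/
theorem HasWidthLE.exists_isChainColoring (hs : HasWidthLE s k) :
    ∃ c, IsChainColoring s k c := by
  classical
  induction s using Finset.strongInduction generalizing k with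
  | H s ih =>
  rcases s.eq_empty_or_nonempty with rfl | hne
  · exact ⟨fun _ => 0, by simp, by simp⟩
  obtain ⟨a, ha⟩ := s.exists_maximal hne
  obtain ⟨k, rfl⟩ : ∃ l, k = l + 1 := Nat.exists_eq_add_of_le' <| by
    simpa using hs (Finset.singleton_subset_iff.2 ha.prop) (by simp)
  obtain ⟨c, hc⟩ := ih (s.erase a) (Finset.erase_ssubset ha.prop)
    fun t ht => hs (ht.trans (Finset.erase_subset a s))
  obtain ⟨K, haK, hK, hwidth⟩ := hc.exists_isChain_hasWidthLE_sdiff ha hs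
  obtain ⟨d, hd⟩ := ih (s \ K) (Finset.sdiff_subset.ssubset_of_mem_notMem ha.prop
    fun h => (Finset.mem_sdiff.1 h).2 haK) hwidth
  exact ⟨_, hd.extend hK⟩

end Dilworth

theorem exists_strictAnti_fin (α : Type*) [Preorder α] [Finite α] :
    ∃ depth : α → Fin (Nat.card α + 1), StrictAnti depth :=
  ⟨fun a => ⟨(Set.Ioi a).ncard, Nat.lt_succ_of_le (Set.ncard_le_card _)⟩, fun _ _ hab =>
    Fin.mk_lt_mk.2 (Set.ncard_lt_ncard (Set.Ioi_ssubset_Ioi hab))⟩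

theorem exists_leg_depth_of_antichain_card_le {α : Type*} [Preorder α] [Finite α] {k : ℕ}
    (hk : ∀ t : Finset α, IsAntichain (· ≤ ·) (t : Set α) → t.card ≤ k) :
    ∃ place : α → Fin k × Fin (Nat.card α + 1), ∀ a b,
      (place a).1 = (place b).1 → (place a).2 ≤ (place b).2 → b ≤ a := by
  have := Fintype.ofFinite α
  have hwidth : HasWidthLE (Finset.univ : Finset α) k := fun t _ => hk t
  obtain ⟨c, hc⟩ := hwidth.exists_isChainColoring
  obtain ⟨depth, hdepth⟩ := exists_strictAnti_fin α
  refine ⟨fun a => (⟨c a, hc.lt (Finset.mem_univ a)⟩, depth a), fun a b hleg hle => ?_⟩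
  rcases hc.total (Finset.mem_univ a) (Finset.mem_univ b) (Fin.mk.inj hleg) with hab | hba
  · by_contra hba
    exact (hdepth (hab.lt_of_not_ge hba)).not_ge hle
  · exact hba

theorem notMem_treeLeaves_of_adj {W : Type} {T : SimpleGraph W} {w a b : W} (ha : T.Adj w a)
    (hb : T.Adj w b) (hab : a ≠ b) : w ∉ treeLeaves T := fun hw => by
  obtain ⟨z, hz⟩ := Set.ncard_eq_one.1 hw
  exact hab (Set.subsingleton_singleton.anti hz.le ha hb)

/-- The relation "`x` is the parent of `y`" of a parent map `p`, in which `p y = none` means that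
the parent of `y` is the root. A parent map describes a rooted tree if this relation is well
founded, and its reflexive transitive closure is then the ancestor relation. -/
def IsParent {α : Type*} (p : α → Option α) (x y : α) : Prop := p y = some x

/-- The graph with root `none` joining each `some x` to `p x`. -/
def parentGraph {α : Type*} (p : α → Option α) : SimpleGraph (Option α) :=
  SimpleGraph.fromRel fun a b => ∃ x, a = some x ∧ b = p x

namespace parentGraph

section Tree

variable {α : Type*} {p : α → Option α}

theorem adj_parent (hp : WellFounded (IsParent p)) (x : α) :
    (parentGraph p).Adj (some x) (p x) :=
  (SimpleGraph.fromRel_adj _ _ _).2 ⟨fun h => hp.irrefl.irrefl x h.symm, Or.inl ⟨x, rfl, rfl⟩⟩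

theorem induce_connected (hp : WellFounded (IsParent p)) {S : Set (Option α)}
    (hroot : none ∈ S) (hparent : ∀ x, some x ∈ S → p x ∈ S) :
    ((parentGraph p).induce S).Connected := by
  rw [SimpleGraph.connected_iff_exists_forall_reachable]
  refine ⟨⟨none, hroot⟩, ?_⟩
  have reachable_some (x : α) (hx : some x ∈ S) :
      ((parentGraph p).induce S).Reachable ⟨none, hroot⟩ ⟨some x, hx⟩ := by
    induction x using hp.induction with
    | _ x ih =>
    have hadj : ((parentGraph p).induce S).Adj ⟨p x, hparent x hx⟩ ⟨some x, hx⟩ :=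
      (adj_parent hp x).symm
    refine SimpleGraph.Reachable.trans ?_ hadj.reachable
    obtain hpx | ⟨y, hpx⟩ := (p x).eq_none_or_eq_some
    · simp only [hpx, SimpleGraph.Reachable.rfl]
    · simpa only [hpx] using ih y hpx (hpx ▸ hparent x hx)
  rintro ⟨_ | x, hx⟩
  · exact .refl _
  · exact reachable_some x hx

theorem connected (hp : WellFounded (IsParent p)) : (parentGraph p).Connected :=
  (SimpleGraph.induceUnivIso _).connected_iff.1
    (induce_connected hp (Set.mem_univ _) fun _ _ => Set.mem_univ _)

theorem edgeSet_subset_range : (parentGraph p).edgeSet ⊆ Set.range fun x => s(some x, p x) := by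
  rintro e hab
  induction e using Sym2.ind with
  | _ a b =>
  obtain ⟨-, ⟨x, rfl, rfl⟩ | ⟨x, rfl, rfl⟩⟩ :=
    (SimpleGraph.fromRel_adj _ _ _).1 ((SimpleGraph.mem_edgeSet _).1 hab)
  · exact ⟨x, rfl⟩
  · exact ⟨x, Sym2.eq_swap⟩

theorem isTree [Finite α] (hp : WellFounded (IsParent p)) : (parentGraph p).IsTree := by
  rw [SimpleGraph.isTree_iff_connected_and_card]
  refine ⟨connected hp, le_antisymm ?_ (connected hp).card_vert_le_card_edgeSet_add_one⟩
  rw [Finite.card_option]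
  exact Nat.succ_le_succ <| (Nat.card_mono (Set.finite_range _) edgeSet_subset_range).trans
    (Finite.card_range_le _)

end Tree

variable {V α : Type} {p : α → Option α}

theorem treeLeaves_subset (hp : WellFounded (IsParent p)) {x y : α} (hxy : x ≠ y)
    (hx : p x = none) (hy : p y = none) :
    treeLeaves (parentGraph p) ⊆ some '' {z | ∀ w, ¬ IsParent p z w} := by
  rintro (_ | z) hz
  · exact absurd hz <| notMem_treeLeaves_of_adj (hx ▸ (adj_parent hp x).symm)
      (hy ▸ (adj_parent hp y).symm) (Option.some_injective _ |>.ne hxy)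
  · refine ⟨z, fun w hw => ?_, rfl⟩
    refine notMem_treeLeaves_of_adj (adj_parent hp z) (hw ▸ (adj_parent hp w).symm) (fun h => ?_) hz
    exact hp.asymmetric _ _ hw h

/-- The catch representation in which the sink of `v` is `place v` and the source set of `u` is the
union of the paths from the root to the sinks of the successors of `u`. -/
def catchRep {E : V → V → Prop} (hp : WellFounded (IsParent p)) (place : V → α)
    (hplace : ∀ v w, Relation.ReflTransGen (IsParent p) (place v) (place w) →
      {u | E u w} ⊆ {u | E u v}) : SubtreeRep E (parentGraph p) where
  src u := insert none
    (some '' {x | ∃ v, E u v ∧ Relation.ReflTransGen (IsParent p) x (place v)})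
  snk v := {some (place v)}
  src_connected u := by
    refine induce_connected hp (Set.mem_insert _ _) ?_
    rintro x (⟨⟨⟩⟩ | ⟨_, ⟨v, huv, hxv⟩, ⟨⟩⟩)
    rcases hpx : p x with _ | y
    · exact Set.mem_insert _ _
    · exact Or.inr ⟨y, ⟨v, huv, hxv.head hpx⟩, rfl⟩
  snk_connected v := SimpleGraph.Connected.of_subsingleton
  rep u v := by
    rw [Set.inter_singleton_nonempty]
    refine ⟨fun huv => Or.inr ⟨_, ⟨v, huv, .refl⟩, rfl⟩, ?_⟩
    rintro (⟨⟨⟩⟩ | ⟨_, ⟨w, huw, hvw⟩, ⟨⟩⟩)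
    exact hplace v w hvw huw

theorem catchLeafage_le_ncard_treeLeaves [Finite α] {E : V → V → Prop}
    (hp : WellFounded (IsParent p)) (place : V → α)
    (hplace : ∀ v w, Relation.ReflTransGen (IsParent p) (place v) (place w) →
      {u | E u w} ⊆ {u | E u v}) :
    catchLeafage E ≤ (treeLeaves (parentGraph p)).ncard :=
  Nat.sInf_le ⟨_, Fintype.ofFinite _, _, catchRep hp place hplace, isTree hp,
    fun _ => ⟨_, rfl⟩, rfl⟩

end parentGraph

/-- The parent map of the spider with legs indexed by `ι`, each a path on `n + 1` vertices: `(i, j)`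
is the vertex at distance `j + 1` from the body, the root `none`, on the leg `i`. -/
def spiderParent (ι : Type*) (n : ℕ) (x : ι × Fin (n + 1)) : Option (ι × Fin (n + 1)) :=
  Fin.cases none (fun j => some (x.1, j.castSucc)) x.2

namespace spiderParent

section Legs

variable {ι : Type*} {n : ℕ} {x y : ι × Fin (n + 1)}

theorem isParent_iff : IsParent (spiderParent ι n) x y ↔ x.1 = y.1 ∧ x.2.val + 1 = y.2.val := by
  obtain ⟨i, a⟩ := x
  obtain ⟨j, b⟩ := y
  cases b using Fin.cases with
  | zero => simp [IsParent, spiderParent]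
  | succ b => simp [IsParent, spiderParent, Prod.ext_iff, Fin.ext_iff, eq_comm]

theorem wellFounded_isParent (ι : Type*) (n : ℕ) : WellFounded (IsParent (spiderParent ι n)) :=
  (measure fun x : ι × Fin (n + 1) => x.2.val).wf.mono fun _ _ h =>
    Nat.lt_of_succ_le (isParent_iff.1 h).2.le

theorem fst_eq_and_snd_le_of_reflTransGen
    (h : Relation.ReflTransGen (IsParent (spiderParent ι n)) x y) : x.1 = y.1 ∧ x.2 ≤ y.2 := by
  induction h with
  | refl => exact ⟨rfl, le_rfl⟩
  | tail _ hstep ih =>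
    obtain ⟨hfst, hsnd⟩ := isParent_iff.1 hstep
    exact ⟨ih.1.trans hfst, ih.2.trans (Fin.le_def.2 (by omega))⟩

theorem setOf_forall_not_isParent_subset :
    {x | ∀ y, ¬ IsParent (spiderParent ι n) x y} ⊆ Set.range fun i => (i, Fin.last n) := by
  rintro ⟨i, j⟩ hx
  cases j using Fin.lastCases with
  | last => exact ⟨i, rfl⟩
  | cast j => exact (hx (i, j.succ) (isParent_iff.2 ⟨rfl, by simp⟩)).elim

end Legs

theorem ncard_treeLeaves_le {ι : Type} [Finite ι] [Nontrivial ι] (n : ℕ) :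
    (treeLeaves (parentGraph (spiderParent ι n))).ncard ≤ Nat.card ι := by
  obtain ⟨i, j, hij⟩ := exists_pair_ne ι
  have hsub : treeLeaves (parentGraph (spiderParent ι n)) ⊆
      Set.range fun i => some (i, Fin.last n) := by
    refine (parentGraph.treeLeaves_subset (wellFounded_isParent ι n) (x := (i, 0)) (y := (j, 0))
      (by simpa using hij) rfl rfl).trans ?_
    rw [← Function.comp_def, Set.range_comp]
    exact Set.image_mono setOf_forall_not_isParent_subset
  exact (Set.ncard_le_ncard hsub (Set.finite_range _)).trans (Finite.card_range_le _)

end spiderParent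

theorem antichain_card_le_incWidth {V : Type} {E : V → V → Prop}
    (hfin : (Set.range fun v => {u | E u v}).Finite) {A : Finset (Set V)}
    (hA : (A : Set (Set V)) ⊆ Set.range fun v => {u | E u v})
    (hanti : IsAntichain (· ⊆ ·) (A : Set (Set V))) : A.card ≤ incWidth E := by
  refine le_csSup ⟨(Set.range fun v => {u | E u v}).ncard, ?_⟩ ⟨A, hA, hanti, rfl⟩
  rintro _ ⟨B, hB, -, rfl⟩
  simpa using Set.ncard_le_ncard hB hfin

theorem stmt_14_general {V : Type} (E : V → V → Prop)
    (hfin : (Set.range fun v => {u | E u v}).Finite) (hw : 2 ≤ incWidth E) :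
    catchLeafage E ≤ incWidth E := by
  let P : Set (Set V) := Set.range fun v => {u | E u v}
  let pred (v : V) : P := ⟨{u | E u v}, v, rfl⟩
  have : Finite P := hfin
  have hwidth (t : Finset P) (ht : IsAntichain (· ≤ ·) (t : Set P)) : t.card ≤ incWidth E := by
    simpa using antichain_card_le_incWidth (A := t.map (.subtype _)) hfin
      (by simp [P]) (by simpa using ht.image_embedding (OrderEmbedding.subtype _))
  obtain ⟨place, hplace⟩ := exists_leg_depth_of_antichain_card_le hwidth
  have : Nontrivial (Fin (incWidth E)) := Fin.nontrivial_iff_two_le.2 hw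
  calc catchLeafage E
      ≤ (treeLeaves (parentGraph (spiderParent (Fin (incWidth E)) _))).ncard :=
        parentGraph.catchLeafage_le_ncard_treeLeaves (spiderParent.wellFounded_isParent _ _)
          (fun v => place (pred v)) fun v w hvw =>
            have ⟨hleg, hdepth⟩ := spiderParent.fst_eq_and_snd_le_of_reflTransGen hvw
            hplace (pred v) (pred w) hleg hdepth
    _ ≤ Nat.card (Fin (incWidth E)) := spiderParent.ncard_treeLeaves_le _
    _ = incWidth E := Nat.card_fin _

/-- For every digraph `D` with `w(P(D)) ≥ 2`, the catch leafage
satisfies `l*(D) ≤ w(P(D))`. -/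
theorem stmt_14 {V : Type} [Fintype V] (E : V → V → Prop)
    (hw : 2 ≤ incWidth E) :
    catchLeafage E ≤ incWidth E :=
  stmt_14_general E (Set.finite_range _) hw
end

section
/- For n ≥ 3, let F_n be the digraph on vertices {1, …, n} defined by: for i, j < n, (i,j) ∈ E(F_n) iff i = j; and (i,n) ∈ E(F_n) and (n,j) ∈ E(F_n) for all i, j ≤ n (adjacency matrix [[I, Y],[Yᵀ, 1]] with I the (n−1)×(n−1) identity and Y a column of n−1 ones). Then f*(F_n) = l(F_n) = 2, but l*(F_n) = n − 1. -/
/-!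
The complement of `F_n` is the relation "distinct and both different from the hub". It splits
along a linear order into the Ferrers digraphs `<` and `>`, and one Ferrers digraph cannot contain
both `(a, b)` and `(b, a)` without a loop at `a` or `b`. On a path, `F_n` is represented by giving
the hub the whole path and every other vertex its own point.

In a catch representation the sink set of the hub is a single point `r`, which lies in every source
set. Choose `x i` in both the source and the sink set of each `i` other than the hub. The path from
`r` to `x i` stays in the source set of `i`, hence avoids the sink sets of the other vertices. Thus
the `x i` lie on different branches of the host tree rooted at `r`, and each branch ends in a leaf.
-/

section Leaves

variable {W : Type} {T : SimpleGraph W}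

theorem mem_treeLeaves_iff_existsUnique_adj {w : W} : w ∈ treeLeaves T ↔ ∃! x, T.Adj w x := by
  simp only [treeLeaves, Set.mem_ofPred_eq, Set.ncard_eq_one, Set.eq_singleton_iff_unique_mem,
    SimpleGraph.mem_neighborSet, ExistsUnique]

theorem two_le_ncard_treeLeaves [Finite W] [Nontrivial W] (hT : T.IsTree) :
    2 ≤ (treeLeaves T).ncard := by
  classical
  have := Fintype.ofFinite W
  obtain ⟨u, v, huv, hu, hv⟩ := hT.exists_ne_and_degree_eq_one
  rw [SimpleGraph.degree_eq_one_iff_existsUnique_adj, ← mem_treeLeaves_iff_existsUnique_adj]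
    at hu hv
  exact (Set.one_lt_ncard (Set.toFinite _)).2 ⟨u, hu, v, hv, huv⟩

theorem end_mem_treeLeaves_of_forall_adj_mem_support (hT : T.IsAcyclic) {r l : W}
    {p : T.Walk r l} (hp : p.IsPath) (hrl : r ≠ l) (hmax : ∀ y, T.Adj l y → y ∈ p.support) :
    l ∈ treeLeaves T :=
  mem_treeLeaves_iff_existsUnique_adj.2
    ⟨p.penultimate, (p.adj_penultimate (SimpleGraph.Walk.not_nil_of_ne hrl)).symm,
      fun y hy ↦ hT.eq_penultimate_of_adj_end hp hy (hmax y hy)⟩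

theorem exists_isPath_to_treeLeaf_through [Finite W] (hT : T.IsTree) {r x : W} (hx : x ≠ r) :
    ∃ l ∈ treeLeaves T, ∃ p : T.Walk r l, p.IsPath ∧ x ∈ p.support := by
  have := Fintype.ofFinite W
  let lengths : Set ℕ := {m | ∃ l, ∃ p : T.Walk r l, p.IsPath ∧ x ∈ p.support ∧ p.length = m}
  have lengths_finite : lengths.Finite :=
    (Set.finite_lt_nat (Fintype.card W)).subset fun m ⟨_, _, hp, _, hm⟩ ↦ hm ▸ hp.length_lt
  have lengths_nonempty : lengths.Nonempty := by
    obtain ⟨q, hq⟩ := hT.connected.exists_isPath r x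
    exact ⟨q.length, x, q, hq, q.end_mem_support, rfl⟩
  obtain ⟨_, ⟨l, p, hp, hxp, rfl⟩, hmax⟩ := lengths_finite.exists_maximal lengths_nonempty
  have hrl : r ≠ l := by
    rintro rfl
    rw [(SimpleGraph.Walk.isPath_iff_nil.1 hp).eq_nil, SimpleGraph.Walk.mem_support_nil_iff] at hxp
    exact hx hxp
  refine ⟨l, end_mem_treeLeaves_of_forall_adj_mem_support hT.isAcyclic hp hrl fun y hy ↦ ?_,
    p, hp, hxp⟩
  by_contra hyp
  have hlonger : p.length + 1 ∈ lengths :=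
    ⟨y, p.concat hy, hp.concat hyp hy, p.support_subset_support_concat hy hxp, p.length_concat hy⟩
  exact absurd (hmax hlonger (Nat.le_succ _)) (Nat.not_succ_le_self _)

theorem card_le_ncard_treeLeaves_of_subsingleton_on_paths [Finite W] {ι : Type*} [Nontrivial ι]
    (hT : T.IsTree) {r : W} {x : ι → W}
    (hx : ∀ ⦃i j l⦄ ⦃p : T.Walk r l⦄, p.IsPath → x i ∈ p.support → x j ∈ p.support → i = j) :
    Nat.card ι ≤ (treeLeaves T).ncard := by
  have hxr : ∀ i, x i ≠ r := by
    intro i hi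
    obtain ⟨j, hji⟩ := exists_ne i
    obtain ⟨p, hp⟩ := hT.connected.exists_isPath r (x j)
    exact hji (hx hp p.end_mem_support (hi ▸ p.start_mem_support))
  choose leaf leaf_mem hpath using fun i ↦ exists_isPath_to_treeLeaf_through hT (hxr i)
  have leaf_injective : Function.Injective leaf := by
    intro i j hij
    obtain ⟨p, hp, hip⟩ := hpath i
    obtain ⟨q, hq, hjq⟩ : ∃ q : T.Walk r (leaf i), q.IsPath ∧ x j ∈ q.support := hij ▸ hpath j
    obtain rfl := (hT.existsUnique_path r (leaf i)).unique hp hq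
    exact hx hp hip hjq
  rw [← Nat.card_coe_set_eq]
  exact Nat.card_le_card_of_injective (fun i ↦ (⟨leaf i, leaf_mem i⟩ : treeLeaves T))
    fun i j hij ↦ leaf_injective (congrArg Subtype.val hij)

end Leaves

section Paths

variable {W : Type*} {T : SimpleGraph W}

theorem support_subset_of_connected_induce (hT : T.IsAcyclic) {S : Set W}
    (hS : (T.induce S).Connected) {a b : W} (ha : a ∈ S) (hb : b ∈ S) {p : T.Walk a b}
    (hp : p.IsPath) {x : W} (hx : x ∈ p.support) : x ∈ S := by
  obtain ⟨q, hq⟩ := hS.exists_isPath ⟨a, ha⟩ ⟨b, hb⟩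
  let q' : T.Walk a b := q.map (SimpleGraph.Embedding.induce S).toHom
  have hq' : q'.IsPath := hq.map Subtype.val_injective
  obtain rfl : p = q' := congrArg Subtype.val ((hT.subsingleton_path a b).elim ⟨p, hp⟩ ⟨q', hq'⟩)
  obtain ⟨y, -, rfl⟩ := List.mem_map.1 ((SimpleGraph.Walk.support_map _ q) ▸ hx)
  exact y.2

theorem mem_support_takeUntil_or_mem_support_takeUntil [DecidableEq W] {a b x y : W}
    (p : T.Walk a b) (hx : x ∈ p.support) (hy : y ∈ p.support) :
    x ∈ (p.takeUntil y hy).support ∨ y ∈ (p.takeUntil x hx).support :=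
  (List.prefix_or_prefix_of_prefix (p.support_takeUntil_prefix_support hx)
    (p.support_takeUntil_prefix_support hy)).imp
    (fun h ↦ h.subset (SimpleGraph.Walk.end_mem_support _))
    (fun h ↦ h.subset (SimpleGraph.Walk.end_mem_support _))

end Paths

section HasseDiagram

variable {α : Type*} [LinearOrder α]

theorem isAcyclic_hasse : (SimpleGraph.hasse α).IsAcyclic := by
  refine SimpleGraph.isAcyclic_iff_forall_adj_isBridge.2 fun a b hab ↦ ?_
  wlog hcov : a ⋖ b generalizing a b
  · rw [Sym2.eq_swap]
    exact this b a hab.symm (hab.resolve_left hcov)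
  rw [SimpleGraph.isBridge_iff, SimpleGraph.reachable_iff_reflTransGen]
  intro hreach
  have Iic_closed : ∀ x, Relation.ReflTransGen
      ((SimpleGraph.hasse α).deleteEdges {s(a, b)}).Adj a x → x ≤ a := by
    intro x hx
    induction hx with
    | refl => exact le_rfl
    | @tail x y _ hxy hxa =>
      by_contra! hay
      obtain ⟨hadj, hne⟩ := SimpleGraph.deleteEdges_adj.1 hxy
      have hcov_xy : x ⋖ y := hadj.resolve_right fun h ↦ (h.lt.trans_le hxa).not_gt hay
      obtain rfl : x = a := hxa.eq_of_not_lt fun hlt ↦ hcov_xy.2 hlt hay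
      obtain rfl : y = b := hcov_xy.unique_right hcov
      exact hne rfl
  exact hcov.lt.not_ge (Iic_closed b hreach)

theorem isTree_hasse [SuccOrder α] [IsSuccArchimedean α] [Nonempty α] :
    (SimpleGraph.hasse α).IsTree :=
  ⟨⟨SimpleGraph.hasse_preconnected_of_succ α⟩, isAcyclic_hasse⟩

end HasseDiagram

theorem treeLeaves_hasse {α : Type} [LinearOrder α] [SuccOrder α] [PredOrder α] [BoundedOrder α]
    [Nontrivial α] : treeLeaves (SimpleGraph.hasse α) = {⊥, ⊤} := by
  ext a
  rw [mem_treeLeaves_iff_existsUnique_adj]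
  constructor
  · rintro ⟨x, -, hx⟩
    by_contra! ha
    simp only [Set.mem_insert_iff, Set.mem_singleton_iff, not_or, ← isMin_iff_eq_bot,
      ← isMax_iff_eq_top] at ha
    have hsucc := Order.covBy_succ_of_not_isMax ha.2
    have hpred := Order.pred_covBy_of_not_isMin ha.1
    exact (hpred.lt.trans hsucc.lt).ne ((hx _ (.inr hpred)).trans (hx _ (.inl hsucc)).symm)
  · rintro (rfl | rfl)
    · exact ⟨Order.succ ⊥, .inl (Order.covBy_succ_of_not_isMax not_isMax_bot), fun y hy ↦
        (hy.resolve_right not_covBy_bot).succ_eq.symm⟩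
    · exact ⟨Order.pred ⊤, .inr (Order.pred_covBy_of_not_isMin not_isMin_top), fun y hy ↦
        (hy.resolve_left not_top_covBy).pred_eq.symm⟩

theorem treeLeaves_starGraph {W : Type} {c : W} (hc : ({c}ᶜ : Set W).Nontrivial) :
    treeLeaves (SimpleGraph.starGraph c) = {c}ᶜ := by
  ext w
  rw [mem_treeLeaves_iff_existsUnique_adj]
  constructor
  · rintro ⟨x, -, hx⟩ rfl
    obtain ⟨a, ha, b, hb, hab⟩ := hc
    exact hab ((hx a (SimpleGraph.starGraph_center_adj (Ne.symm ha))).trans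
      (hx b (SimpleGraph.starGraph_center_adj (Ne.symm hb))).symm)
  · intro hw
    exact ⟨c, SimpleGraph.starGraph_center_adj' (Ne.symm hw), fun y hy ↦
      (SimpleGraph.starGraph_adj.1 hy).2.resolve_left hw⟩

namespace SubtreeRep

variable {V W : Type} {E : V → V → Prop} {T : SimpleGraph W}

theorem nontrivial_host (R : SubtreeRep E T) {u v : V} (huv : ¬ E u v) : Nontrivial W := by
  obtain ⟨⟨x, hx⟩⟩ := (R.src_connected u).nonempty
  obtain ⟨⟨y, hy⟩⟩ := (R.snk_connected v).nonempty
  refine ⟨x, y, ?_⟩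
  rintro rfl
  exact huv ((R.rep u v).2 ⟨x, hx, hy⟩)

theorem rel_of_mem_support (R : SubtreeRep E T) (hT : T.IsAcyclic) {u v : V} {a b x : W}
    (ha : a ∈ R.src u) (hb : b ∈ R.src u) {p : T.Walk a b} (hp : p.IsPath) (hxp : x ∈ p.support)
    (hx : x ∈ R.snk v) : E u v :=
  (R.rep u v).2 ⟨x, support_subset_of_connected_induce hT (R.src_connected u) ha hb hp hxp, hx⟩

theorem card_le_ncard_treeLeaves_of_snk_eq_singleton [Finite W] (R : SubtreeRep E T)
    (hT : T.IsTree) {c : V} {r : W} (hc : R.snk c = {r}) {ι : Type*} [Nontrivial ι] {a : ι → V}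
    (hac : ∀ i, E (a i) c) (ha : ∀ i j, E (a i) (a j) ↔ i = j) :
    Nat.card ι ≤ (treeLeaves T).ncard := by
  classical
  have hr : ∀ i, r ∈ R.src (a i) := fun i ↦ by
    rw [← Set.inter_singleton_nonempty, ← hc, ← R.rep]
    exact hac i
  choose x x_mem_src x_mem_snk using fun i ↦ (R.rep (a i) (a i)).1 ((ha i i).2 rfl)
  have eq_of_mem_path : ∀ {i j} {p : T.Walk r (x i)}, p.IsPath → x j ∈ p.support → i = j :=
    fun hp hj ↦ (ha _ _).1
      (R.rel_of_mem_support hT.isAcyclic (hr _) (x_mem_src _) hp hj (x_mem_snk _))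
  refine card_le_ncard_treeLeaves_of_subsingleton_on_paths hT (r := r) (x := x)
    fun i j l p hp hi hj ↦ ?_
  rcases mem_support_takeUntil_or_mem_support_takeUntil p hi hj with h | h
  · exact (eq_of_mem_path (hp.takeUntil hj) h).symm
  · exact eq_of_mem_path (hp.takeUntil hi) h

/-- If `c` is a successor of every vertex, successor sets are subtrees of the star centered at `c`.
Taking them as source sets and `{v}` as sink set of `v` gives a catch representation. -/
def ofStar {c : V} (hc : ∀ u, E u c) : SubtreeRep E (SimpleGraph.starGraph c) where
  src u := {v | E u v}
  snk v := {v}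
  src_connected u :=
    .of_isUniversal (v := ⟨c, hc u⟩) fun _ hv ↦
      SimpleGraph.starGraph_center_adj (Subtype.coe_ne_coe.2 hv)
  snk_connected _ := .of_subsingleton
  rep _ _ := Set.inter_singleton_nonempty.symm

end SubtreeRep

section Ferrers

variable {V : Type} {F : V → V → Prop}

theorem isFerrers_iff_forall_rel_or_rel :
    IsFerrers F ↔ ∀ ⦃u u' v v'⦄, F u v → F u' v' → F u' v ∨ F u v' := by
  constructor
  · intro hF u u' v v' huv huv'
    exact (hF u u').imp (fun h ↦ h huv) (fun h ↦ h huv')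
  · intro hF u u'
    by_contra! h
    obtain ⟨⟨v, huv, hu'v⟩, ⟨v', hu'v', huv'⟩⟩ := h.imp Set.not_subset.1 Set.not_subset.1
    exact (hF huv hu'v').elim hu'v huv'

theorem isFerrers_lt [LinearOrder V] : IsFerrers fun u v : V ↦ u < v :=
  fun u u' ↦ (le_total u' u).imp (fun h _ ↦ h.trans_lt) (fun h _ ↦ h.trans_lt)

theorem isFerrers_gt [LinearOrder V] : IsFerrers fun u v : V ↦ v < u :=
  fun u u' ↦ (le_total u u').imp (fun h _ hv ↦ hv.trans_le h) (fun h _ hv ↦ hv.trans_le h)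

theorem IsFerrers.restrict (hF : IsFerrers F) (A B : Set V) :
    IsFerrers fun u v ↦ u ∈ A ∧ v ∈ B ∧ F u v := by
  rw [isFerrers_iff_forall_rel_or_rel] at hF ⊢
  rintro u u' v v' ⟨hu, hv, huv⟩ ⟨hu', hv', huv'⟩
  exact (hF huv huv').imp (⟨hu', hv, ·⟩) (⟨hu, hv', ·⟩)

theorem nontrivial_of_isFerrers_cover {ι : Type*} {E : V → V → Prop} {G : ι → V → V → Prop}
    (hG : ∀ i, IsFerrers (G i)) (hE : ∀ u v, ¬ E u v ↔ ∃ i, G i u v) {u u' v v' : V}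
    (huv : ¬ E u v) (hu'v' : ¬ E u' v') (hu'v : E u' v) (huv' : E u v') : Nontrivial ι := by
  obtain ⟨i, hi⟩ := (hE u v).1 huv
  obtain ⟨j, hj⟩ := (hE u' v').1 hu'v'
  refine ⟨i, j, ?_⟩
  rintro rfl
  rcases isFerrers_iff_forall_rel_or_rel.1 (hG i) hi hj with h | h
  · exact (hE _ _).2 ⟨i, h⟩ hu'v
  · exact (hE _ _).2 ⟨i, h⟩ huv'

end Ferrers

/-- The reflexive star digraph with hub `c`: all loops, and all edges from and to `c`. The digraph
`F_n` is the case of the last vertex of `Fin n`. -/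
def LoopedStar {V : Type} (c u v : V) : Prop := u = v ∨ u = c ∨ v = c

theorem FnRel_succ (n : ℕ) : FnRel (n + 1) = LoopedStar (Fin.last n) := by
  ext u v
  simp only [FnRel, LoopedStar, Fin.ext_iff, Fin.val_last, Nat.add_sub_cancel]

namespace LoopedStar

variable {V : Type} {c : V}

theorem exists_not_rel (hc : ({c}ᶜ : Set V).Nontrivial) :
    ∃ a b, ¬ LoopedStar c a b ∧ ¬ LoopedStar c b a := by
  obtain ⟨a, ha, b, hb, hab⟩ := hc
  exact ⟨a, b, by simp_all [LoopedStar, Ne.symm]⟩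

theorem fstar_eq_two (hc : ({c}ᶜ : Set V).Nontrivial) : fstar (LoopedStar c) = 2 := by
  refine IsLeast.csInf_eq ⟨?_, ?_⟩
  · obtain ⟨_, -⟩ := exists_wellFoundedLT V
    let A : Set V := {c}ᶜ
    refine ⟨![fun u v ↦ u ∈ A ∧ v ∈ A ∧ u < v, fun u v ↦ u ∈ A ∧ v ∈ A ∧ v < u], ?_, ?_, ?_⟩
    · exact Fin.forall_fin_two.2 ⟨isFerrers_lt.restrict A A, isFerrers_gt.restrict A A⟩
    · refine Fin.forall_fin_two.2 ⟨Fin.forall_fin_two.2 ⟨?_, ?_⟩, Fin.forall_fin_two.2 ⟨?_, ?_⟩⟩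
      · exact fun h ↦ absurd rfl h
      · exact fun _ u v h ↦ lt_asymm h.1.2.2 h.2.2.2
      · exact fun _ u v h ↦ lt_asymm h.1.2.2 h.2.2.2
      · exact fun h ↦ absurd rfl h
    · intro u v
      calc
        ¬ LoopedStar c u v ↔ u ∈ A ∧ v ∈ A ∧ (u < v ∨ v < u) := by
          rw [← ne_iff_lt_or_gt]
          simp only [LoopedStar, not_or, A, Set.mem_compl_singleton_iff]
          tauto
        _ ↔ _ := by
          simp only [Fin.exists_fin_two, Matrix.cons_val_zero, Matrix.cons_val_one, and_or_left]
  · rintro k ⟨F, hF, -, hE⟩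
    obtain ⟨a, b, hab, hba⟩ := exists_not_rel hc
    rw [← Fin.nontrivial_iff_two_le]
    exact nontrivial_of_isFerrers_cover hF hE hab hba (.inl rfl) (.inl rfl)

theorem nonempty_subtreeRep (c : V) {W : Type} {T : SimpleGraph W} (hT : T.Connected)
    (f : V ↪ W) : Nonempty (SubtreeRep (LoopedStar c) T) := by
  let S (v : V) : Set W := {w | v = c ∨ w = f v}
  have hS : ∀ v, (T.induce (S v)).Connected := by
    intro v
    by_cases hv : v = c
    · have hSv : S v = Set.univ := Set.eq_univ_of_forall fun _ ↦ .inl hv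
      exact hSv ▸ (SimpleGraph.induceUnivIso T).connected_iff.2 hT
    · have hSv : S v = {f v} := Set.ext fun _ ↦ or_iff_right hv
      exact hSv ▸ .of_subsingleton
  refine ⟨⟨S, S, hS, hS, fun u v ↦ ⟨?_, ?_⟩⟩⟩
  · rintro (rfl | rfl | rfl)
    · exact ⟨f u, .inr rfl, .inr rfl⟩
    · exact ⟨f v, .inl rfl, .inr rfl⟩
    · exact ⟨f u, .inr rfl, .inl rfl⟩
  · rintro ⟨w, hu | hu, hv | hv⟩
    · exact .inr (.inl hu)
    · exact .inr (.inl hu)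
    · exact .inr (.inr hv)
    · exact .inl (f.injective (hu.symm.trans hv))

theorem digLeafage_eq_two [Finite V] (hc : ({c}ᶜ : Set V).Nontrivial) :
    digLeafage (LoopedStar c) = 2 := by
  refine IsLeast.csInf_eq ⟨?_, ?_⟩
  · have : Nontrivial V := Set.nontrivial_of_nontrivial hc
    obtain ⟨n, ⟨e⟩⟩ := Finite.exists_equiv_fin V
    have : Nontrivial (Fin n) := e.symm.nontrivial
    have : NeZero n := ⟨by rintro rfl; exact not_nontrivial _ this⟩
    refine ⟨Fin n, inferInstance, SimpleGraph.hasse (Fin n), isTree_hasse,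
      nonempty_subtreeRep c isTree_hasse.connected e.toEmbedding, ?_⟩
    rw [treeLeaves_hasse, Set.ncard_pair bot_ne_top]
  · rintro k ⟨W, _, T, hT, ⟨R⟩, rfl⟩
    obtain ⟨a, b, hab, -⟩ := exists_not_rel hc
    have := R.nontrivial_host hab
    exact two_le_ncard_treeLeaves hT

theorem catchLeafage_eq_ncard_compl [Finite V] (hc : ({c}ᶜ : Set V).Nontrivial) :
    catchLeafage (LoopedStar c) = ({c}ᶜ : Set V).ncard := by
  refine IsLeast.csInf_eq ⟨?_, ?_⟩
  · exact ⟨V, .ofFinite V, SimpleGraph.starGraph c, .ofStar fun _ ↦ .inr (.inr rfl),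
      SimpleGraph.isTree_starGraph c, fun v ↦ ⟨v, rfl⟩, by rw [treeLeaves_starGraph hc]⟩
  · rintro k ⟨W, _, T, R, hT, hsnk, rfl⟩
    obtain ⟨r, hr⟩ := hsnk c
    have := hc.coe_sort
    rw [← Nat.card_coe_set_eq]
    refine R.card_le_ncard_treeLeaves_of_snk_eq_singleton hT hr
      (a := fun v : ({c}ᶜ : Set V) ↦ (v : V)) (fun _ ↦ .inr (.inr rfl)) fun u v ↦ ?_
    simp only [LoopedStar, Subtype.ext_iff]
    exact or_iff_left (not_or.2 ⟨u.2, v.2⟩)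

end LoopedStar

/-- For `n ≥ 3`, the digraph `F_n` with adjacency matrix
`[[I, Y], [Yᵀ, 1]]` satisfies `f*(F_n) = l(F_n) = 2` but `l*(F_n) = n - 1`. -/
theorem stmt_17 (n : ℕ) (hn : 3 ≤ n) :
    fstar (FnRel n) = 2 ∧ digLeafage (FnRel n) = 2 ∧
    catchLeafage (FnRel n) = n - 1 := by
  obtain ⟨m, rfl⟩ : ∃ m, n = m + 1 := ⟨n - 1, by omega⟩
  have card_compl : ({Fin.last m}ᶜ : Set (Fin (m + 1))).ncard = m := by
    rw [Set.ncard_compl, Set.ncard_singleton, Nat.card_fin, Nat.add_sub_cancel]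
  have hc : ({Fin.last m}ᶜ : Set (Fin (m + 1))).Nontrivial :=
    Set.one_lt_ncard_iff_nontrivial.1 (by omega)
  rw [FnRel_succ]
  exact ⟨LoopedStar.fstar_eq_two hc, LoopedStar.digLeafage_eq_two hc,
    (LoopedStar.catchLeafage_eq_ncard_compl hc).trans card_compl⟩
end
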